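/- arXiv:1803.03704 — 5 statements merged into one kernel-verified Lean document; each statement's English description precedes it below -/
import Mathlib

section
/- For every function f from the positive integers to the positive integers, there exist a tree T with maximum degree 3 and a simple graph G such that: G is f(3)-edge-connected, G has minimum degree at least f(|E(T)|), the number of edges of G is divisible by |E(T)|, and yet G admits no T-decomposition. (In particular, the conjecture that some function f makes every f(Δ_T)-edge-connected graph of minimum degree at least f(|E(T)|) and size divisible by |E(T)| be T-decomposable is false, even for trees of maximum degree three.) -/
/-!
The tree `T` is the complete binary tree with `n` levels and `m = 2 ^ n - 2` edges, where `n` is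
large compared with `k = f 3`. The graph `G` consists of two pieces with large minimum degree
joined by exactly `k` edges.

Removing one edge from `T` leaves a component whose size depends only on the level of that edge,
so there are only `n` possible sizes. Suppose the vertices of a copy of `T` are coloured according
to the piece of `G` they lie in. Summing by parts along the tree (`sum_subtreeSize`) shows that,
modulo `m`, the number of edges of the copy inside the first piece is a sum of weights over its
two-coloured edges, where each weight depends only on the level of the edge and on which end lies
in the first piece (`count_true_edges`). Hence, if `G` is decomposed into copies of `T`, the number
of edges of the first piece is modulo `m` a sum of exactly `k` weights taken from a set of at most
`2 * n` (`decomp_count`). There are at most `(2 * n) ^ k` such sums, and this is less than `m` for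
large `n`, so some residue `r` modulo `m` is not attained.

It remains to choose the first piece with `r` edges modulo `m` and the second one so that `m`
divides the total number of edges. The pieces are complete bipartite graphs `K_{a,p}` and `K_{p,b}`
with `p ≡ 1`, `a ≡ r` and `b ≡ - k - r` modulo `m`, and the `k` further edges form a matching
between the two parts of size `p`. This graph is `k`-edge-connected: vertices in the same part have
`k` common neighbours, and consecutive parts are joined by `k` independent edges.
-/

open SimpleGraph

/-- `E'` (a set of edges of `G`) forms a subgraph of `G` isomorphic to `H`. -/
def IsCopyOf {V W : Type*} (G : SimpleGraph V) (E' : Set (Sym2 V)) (H : SimpleGraph W) : Prop :=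
  E' ⊆ G.edgeSet ∧ ∃ f : W ↪ V, E' = Sym2.map f '' H.edgeSet

/-- `G` is `k`-edge-connected: it has at least two vertices and remains connected
after deleting any set of fewer than `k` edges. -/
def EdgeConnected {V : Type*} [Fintype V] (G : SimpleGraph V) (k : ℕ) : Prop :=
  1 < Fintype.card V ∧
    ∀ S : Set (Sym2 V), S.Finite → S.ncard < k → (G.deleteEdges S).Connected

/-- `G` has an `H`-decomposition: a partition of its edge set into (nonempty, pairwise
disjoint) parts, each of which forms a subgraph of `G` isomorphic to `H`. -/
def HasDecompInto {V W : Type*} (G : SimpleGraph V) (H : SimpleGraph W) : Prop :=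
  ∃ (N : ℕ) (P : Fin N → Set (Sym2 V)),
    (∀ i, (P i).Nonempty) ∧ Pairwise (Function.onFun Disjoint P) ∧
      (⋃ i, P i) = G.edgeSet ∧ ∀ i, IsCopyOf G (P i) H

/-! ### Binary heap trees -/

/-- The tree on `m + 1` vertices in which every `v ≠ 0` is joined to its parent `(v - 1) / 2`,
as in a binary heap. For `m = 2 ^ n - 2` it is the complete binary tree with `n` levels. -/
def heapTree (m : ℕ) : SimpleGraph (Fin (m + 1)) where
  Adj a b := (a.val ≠ 0 ∧ (a.val - 1) / 2 = b.val) ∨ (b.val ≠ 0 ∧ (b.val - 1) / 2 = a.val)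
  symm := ⟨fun _ _ h => h.symm⟩
  loopless := ⟨fun a h => by omega⟩

/-- The parent of the vertex `u + 1` of `heapTree m`. -/
def heapParent {m : ℕ} (u : Fin m) : Fin (m + 1) := ⟨u.val / 2, by omega⟩

/-- The edge of `heapTree m` from `u + 1` to its parent. -/
def heapEdge {m : ℕ} (u : Fin m) : Sym2 (Fin (m + 1)) := s(u.succ, heapParent u)

lemma heapEdge_injective (m : ℕ) : Function.Injective (heapEdge (m := m)) := by
  intro u v h
  simp only [heapEdge, heapParent, Sym2.eq_iff, Fin.ext_iff, Fin.val_succ] at h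
  ext
  omega

lemma range_heapEdge (m : ℕ) : Set.range (heapEdge (m := m)) = (heapTree m).edgeSet := by
  ext e
  induction e with | _ a b
  simp only [Set.mem_range, SimpleGraph.mem_edgeSet, heapTree, heapEdge, heapParent, Sym2.eq_iff,
    Fin.ext_iff, Fin.val_succ]
  constructor
  · rintro ⟨u, h⟩
    omega
  · rintro (⟨h0, h⟩ | ⟨h0, h⟩)
    · exact ⟨⟨a.val - 1, by omega⟩, Or.inl ⟨by simp only; omega, h⟩⟩
    · exact ⟨⟨b.val - 1, by omega⟩, Or.inr ⟨by simp only; omega, h⟩⟩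

lemma ncard_edgeSet_heapTree (m : ℕ) : (heapTree m).edgeSet.ncard = m := by
  rw [← range_heapEdge, ← Set.image_univ, Set.ncard_image_of_injective _ (heapEdge_injective m)]
  simp

lemma heapTree_isTree (m : ℕ) : (heapTree m).IsTree := by
  rw [SimpleGraph.isTree_iff_connected_and_card]
  refine ⟨?_, ?_⟩
  · have key : ∀ (n : ℕ) (hn : n < m + 1), (heapTree m).Reachable ⟨n, hn⟩ 0 := by
      intro n
      induction n using Nat.strong_induction_on with
      | _ n ih =>
        intro hn
        by_cases h0 : n = 0
        · subst h0
          exact SimpleGraph.Reachable.refl _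
        · have hadj : (heapTree m).Adj ⟨n, hn⟩ ⟨(n - 1) / 2, by omega⟩ := Or.inl ⟨h0, rfl⟩
          exact hadj.reachable.trans (ih _ (by omega) _)
    exact (SimpleGraph.connected_iff _).2 ⟨fun a b => (key a a.2).trans (key b b.2).symm, ⟨0⟩⟩
  · rw [Nat.card_coe_set_eq, ncard_edgeSet_heapTree]
    simp

lemma heapTree_degree_le (m : ℕ) (w : Fin (m + 1)) :
    ((heapTree m).neighborSet w).ncard ≤ 3 := by
  have hsub : Fin.val '' ((heapTree m).neighborSet w) ⊆
      (({(w.val - 1) / 2, 2 * w.val + 1, 2 * w.val + 2} : Finset ℕ) : Set ℕ) := by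
    rintro _ ⟨b, hb, rfl⟩
    simp only [SimpleGraph.mem_neighborSet, heapTree] at hb
    simp only [Finset.coe_insert, Finset.coe_singleton, Set.mem_insert_iff, Set.mem_singleton_iff]
    omega
  rw [← Set.ncard_image_of_injective _ Fin.val_injective]
  refine (Set.ncard_le_ncard hsub (Finset.finite_toSet _)).trans ?_
  rw [Set.ncard_coe_finset]
  exact Finset.card_le_three

lemma heapTree_degree_one (m : ℕ) (hm : 4 ≤ m) :
    ((heapTree m).neighborSet ⟨1, by omega⟩).ncard = 3 := by
  have hset : Fin.val '' ((heapTree m).neighborSet ⟨1, by omega⟩) =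
      (({0, 3, 4} : Finset ℕ) : Set ℕ) := by
    ext x
    simp only [Set.mem_image, SimpleGraph.mem_neighborSet, heapTree, Finset.coe_insert,
      Finset.coe_singleton, Set.mem_insert_iff, Set.mem_singleton_iff]
    constructor
    · rintro ⟨b, hb, rfl⟩
      omega
    · intro hx
      exact ⟨⟨x, by omega⟩, by simp only; omega, rfl⟩
  rw [← Set.ncard_image_of_injective _ Fin.val_injective, hset, Set.ncard_coe_finset]
  rfl

/-! ### Edge counts of two-coloured complete binary trees -/

/-- The number of vertices, as an element of `ZMod m`, of the subtree rooted at a vertex of level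
`t` in the complete binary tree with `n` levels. The root has level `0`, and the vertex `v` of
`heapTree m` has level `Nat.log 2 (v + 1)`. -/
def subtreeSize (n m : ℕ) (t : ℕ) : ZMod m := 2 ^ (n - t) - 1

/-- The contribution modulo `m` of a two-coloured edge, whose child is at level `t` and has colour `b`,
to the number of edges with both ends coloured `true`. -/
def edgeWeight (n m : ℕ) (x : Fin n × Bool) : ZMod m :=
  if x.2 then subtreeSize n m x.1 - 1 else - subtreeSize n m x.1

lemma sum_range_two_mul_half {R : Type*} [AddCommMonoid R] (f : ℕ → ℕ → R) (M : ℕ) :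
    ∑ u ∈ Finset.range (2 * M), f u (u / 2) =
      ∑ v ∈ Finset.range M, (f (2 * v) v + f (2 * v + 1) v) := by
  induction M with
  | zero => simp
  | succ M ih =>
    rw [show 2 * (M + 1) = 2 * M + 1 + 1 by ring, Finset.sum_range_succ, Finset.sum_range_succ,
      ih, Finset.sum_range_succ, add_assoc, show 2 * M / 2 = M by omega,
      show (2 * M + 1) / 2 = M by omega]

/-- Summation by parts along the tree: since each subtree has one vertex more than its child
subtrees together, and the whole tree has `m + 1 ≡ 1` vertices modulo `m`. -/
lemma sum_subtreeSize (n m : ℕ) (hn : 1 ≤ n) (hm : m = 2 ^ n - 2) (x : ℕ → ZMod m) :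
    ∑ u ∈ Finset.range m, subtreeSize n m (Nat.log 2 (u + 2)) * (x (u + 1) - x (u / 2)) =
      ∑ u ∈ Finset.range m, x (u + 1) := by
  set s : ℕ → ZMod m := fun v => subtreeSize n m (Nat.log 2 (v + 1)) with hs
  obtain ⟨l, rfl⟩ : ∃ l, n = l + 1 := ⟨n - 1, by omega⟩
  obtain ⟨M, hM⟩ : ∃ M, 2 ^ l = M + 1 := ⟨2 ^ l - 1, by have := Nat.one_le_two_pow (n := l); omega⟩
  have hmM : m = 2 * M := by rw [hm, pow_succ]; omega
  have hlogs : ∀ v, Nat.log 2 (2 * v + 1 + 1) = Nat.log 2 (v + 1) + 1 ∧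
      Nat.log 2 (2 * v + 1 + 2) = Nat.log 2 (v + 1) + 1 := by
    intro v
    constructor <;>
    · rw [Nat.log_of_one_lt_of_le (by norm_num) (by omega)]
      congr 2
      omega
  have hinner : ∀ v < M, s (2 * v + 1) + s (2 * v + 2) = s v - 1 := by
    intro v hv
    have h1 : Nat.log 2 (v + 1) < l := Nat.log_lt_of_lt_pow (by omega) (by omega)
    simp only [hs, subtreeSize]
    rw [show 2 * v + 2 + 1 = 2 * v + 1 + 2 by ring, (hlogs v).1, (hlogs v).2,
      show l + 1 - Nat.log 2 (v + 1) = (l + 1 - (Nat.log 2 (v + 1) + 1)) + 1 by omega, pow_succ]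
    ring
  have hleaf : ∀ v, M ≤ v → v < 2 * M + 1 → s v = 1 := by
    intro v h1 h2
    have : Nat.log 2 (v + 1) = l := by
      rw [Nat.log_eq_iff (by right; constructor <;> omega), pow_succ]
      omega
    simp only [hs, subtreeSize, this, Nat.add_sub_cancel_left]
    norm_num
  have hroot : s 0 = 1 := by
    have h2 : ((2 ^ (l + 1) : ℕ) : ZMod m) = 2 := by
      rw [show 2 ^ (l + 1) = m + 2 by rw [hmM, pow_succ]; omega]
      push_cast
      simp
    push_cast at h2
    simp only [hs, subtreeSize, zero_add, Nat.log_one_right, Nat.sub_zero, h2]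
    norm_num
  have hpar : ∑ u ∈ Finset.range m, s (u + 1) * x (u / 2) =
      ∑ v ∈ Finset.range (m + 1), (s v - 1) * x v := by
    have h1 := sum_range_two_mul_half (fun u v => s (u + 1) * x v) M
    rw [← hmM] at h1
    rw [h1, show m + 1 = M + (M + 1) by omega, Finset.sum_range_add,
      Finset.sum_eq_zero (s := Finset.range (M + 1)), add_zero]
    · refine Finset.sum_congr rfl fun v hv => ?_
      rw [← add_mul, hinner v (Finset.mem_range.1 hv)]
    · intro v hv
      have := Finset.mem_range.1 hv
      rw [hleaf (M + v) (by omega) (by omega)]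
      ring
  rw [Finset.sum_range_succ', hroot] at hpar
  change ∑ u ∈ Finset.range m, s (u + 1) * (x (u + 1) - x (u / 2)) = _
  simp only [mul_sub, Finset.sum_sub_distrib]
  rw [hpar]
  simp only [sub_mul, one_mul, Finset.sum_sub_distrib]
  ring

lemma log_lt_of_fin {n m : ℕ} (hm : m = 2 ^ n - 2) (u : Fin m) : Nat.log 2 (u.val + 2) < n :=
  Nat.log_lt_of_lt_pow (by omega) (by have := u.2; omega)

/-- Modulo its number of edges, the number of edges of a two-coloured complete binary tree with
both ends `true` is a sum of weights of its two-coloured edges. -/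
lemma count_true_edges (n m : ℕ) (hn : 1 ≤ n) (hm : m = 2 ^ n - 2) (c : Fin (m + 1) → Bool) :
    ∑ u : Fin m, (if (heapEdge u).map c = s(true, true) then (1 : ZMod m) else 0) =
      ∑ u : Fin m, (if (heapEdge u).map c = s(true, false) then
        edgeWeight n m (⟨Nat.log 2 (u.val + 2), log_lt_of_fin hm u⟩, c u.succ) else 0) := by
  have h := sum_subtreeSize n m hn hm
    (fun v => if hv : v < m + 1 then (if c ⟨v, hv⟩ then 1 else 0) else 0)
  rw [← Fin.sum_univ_eq_sum_range (fun u => subtreeSize n m (Nat.log 2 (u + 2)) * (_ - _)),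
    ← Fin.sum_univ_eq_sum_range (fun u => dite (u + 1 < m + 1) _ _)] at h
  rw [← sub_eq_zero, ← Finset.sum_sub_distrib] at h ⊢
  rw [← neg_eq_zero, ← Finset.sum_neg_distrib] at h
  refine (Finset.sum_congr rfl fun u _ => ?_).trans h
  have h1 : u.val + 1 < m + 1 := by omega
  have h2 : u.val / 2 < m + 1 := by omega
  have h3 : u.succ = ⟨u.val + 1, h1⟩ := rfl
  simp only [heapEdge, Sym2.map_mk, heapParent, h3, h1, h2, dif_pos, edgeWeight]
  cases c ⟨u.val + 1, h1⟩ <;> cases c ⟨u.val / 2, h2⟩ <;> simp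

/-- If `G` has a decomposition into complete binary trees then, for every two-colouring of its
vertices, the number of edges with both ends `true` is, modulo the size `m` of the tree, a sum
of edge weights with one summand for each two-coloured edge. -/
lemma decomp_count {V : Type*} [Finite V] (G : SimpleGraph V) (n m : ℕ) (hn : 1 ≤ n)
    (hm : m = 2 ^ n - 2) (hdec : HasDecompInto G (heapTree m)) (c : V → Bool) :
    ∃ g : {e : G.edgeSet // e.1.map c = s(true, false)} → Fin n × Bool,
      (Nat.card {e : G.edgeSet // e.1.map c = s(true, true)} : ZMod m) =
        ∑ᶠ e, edgeWeight n m (g e) := by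
  classical
  obtain ⟨N, P, -, hdisj, hunion, hcopy⟩ := hdec
  choose φ hφ using fun i => (hcopy i).2
  let Ψ : Fin N × Fin m → Sym2 V := fun x => (heapEdge x.2).map (φ x.1)
  have hΨmem : ∀ x, Ψ x ∈ P x.1 := fun x => by
    rw [hφ, ← range_heapEdge]
    exact ⟨_, ⟨x.2, rfl⟩, rfl⟩
  have hΨinj : Function.Injective Ψ := by
    rintro ⟨i, u⟩ ⟨j, v⟩ h
    have hij : i = j := by
      by_contra hne
      exact Set.disjoint_left.1 (hdisj hne) (hΨmem (i, u)) (h ▸ hΨmem (j, v))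
    subst hij
    have huv : u = v := heapEdge_injective m (Sym2.map.injective (φ i).injective h)
    rw [huv]
  have hΨrange : ∀ e, e ∈ G.edgeSet ↔ ∃ x, Ψ x = e := by
    intro e
    rw [← hunion, Set.mem_iUnion]
    constructor
    · rintro ⟨i, hi⟩
      rw [hφ, ← range_heapEdge] at hi
      obtain ⟨_, ⟨u, rfl⟩, rfl⟩ := hi
      exact ⟨(i, u), rfl⟩
    · rintro ⟨x, rfl⟩
      exact ⟨x.1, hΨmem x⟩
  let F : Fin N × Fin m ≃ G.edgeSet :=
    Equiv.ofBijective (fun x => ⟨Ψ x, (hΨrange _).2 ⟨x, rfl⟩⟩)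
      ⟨fun x y h => hΨinj (Subtype.ext_iff.1 h), fun e => by
        obtain ⟨x, hx⟩ := (hΨrange e.1).1 e.2
        exact ⟨x, Subtype.ext hx⟩⟩
  have hF : ∀ x, (F x).1 = Ψ x := fun _ => rfl
  let g₀ : Fin N × Fin m → Fin n × Bool := fun x =>
    (⟨Nat.log 2 (x.2.val + 2), log_lt_of_fin hm x.2⟩, c (φ x.1 x.2.succ))
  refine ⟨fun e => g₀ (F.symm e.1), ?_⟩
  have : Fintype G.edgeSet := Fintype.ofFinite _
  rw [Nat.card_eq_fintype_card, Fintype.card_subtype, finsum_eq_sum_of_fintype,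
    Finset.natCast_card_filter,
    ← Finset.sum_subtype (Finset.univ.filter fun e : G.edgeSet => e.1.map c = s(true, false))
      (by simp) (fun e => edgeWeight n m (g₀ (F.symm e))),
    Finset.sum_filter, ← F.sum_comp, ← F.sum_comp, Fintype.sum_prod_type, Fintype.sum_prod_type]
  refine Finset.sum_congr rfl fun i _ => ?_
  simp only [hF, F.symm_apply_apply, Ψ, g₀, Sym2.map_map]
  exact count_true_edges n m hn hm (c ∘ φ i)

/-! ### Two complete bipartite graphs joined by a sparse matching -/

/-- The vertices of the host graph: two complete bipartite graphs, with parts of sizes `a`, `p`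
and `p`, `b`. -/
abbrev HostVertex (a p b : ℕ) : Type := (Fin a ⊕ Fin p) ⊕ (Fin p ⊕ Fin b)

/-- The edges of the host graph: those of `K_{a,p}`, those of `K_{p,b}`, and a matching of `k`
edges between the two parts of size `p`. -/
def hostEdge {a p b k : ℕ} (hk : k ≤ p) :
    (Fin a × Fin p) ⊕ ((Fin p × Fin b) ⊕ Fin k) → Sym2 (HostVertex a p b)
  | .inl x => s(.inl (.inl x.1), .inl (.inr x.2))
  | .inr (.inl x) => s(.inr (.inl x.1), .inr (.inr x.2))
  | .inr (.inr i) => s(.inl (.inr (Fin.castLE hk i)), .inr (.inl (Fin.castLE hk i)))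

/-- The graph formed by `K_{a,p}` and `K_{p,b}` with `k` independent edges between their parts
of size `p`. -/
def hostGraph (a b : ℕ) {p k : ℕ} (hk : k ≤ p) : SimpleGraph (HostVertex a p b) :=
  SimpleGraph.fromEdgeSet (Set.range (hostEdge hk))

lemma hostEdge_injective {a p b k : ℕ} (hk : k ≤ p) :
    Function.Injective (hostEdge (a := a) (b := b) hk) := by
  rintro (⟨x, x'⟩ | ⟨x, x'⟩ | x) (⟨y, y'⟩ | ⟨y, y'⟩ | y) h <;> simp_all [hostEdge]

lemma edgeSet_hostGraph {a p b k : ℕ} (hk : k ≤ p) :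
    (hostGraph a b hk).edgeSet = Set.range (hostEdge hk) := by
  rw [hostGraph, SimpleGraph.edgeSet_fromEdgeSet, sdiff_eq_left, Set.disjoint_left]
  rintro _ ⟨x | x | x, rfl⟩ <;> simp [hostEdge]

lemma hostGraph_adj {a p b k : ℕ} (hk : k ≤ p) (x y : HostVertex a p b) :
    (hostGraph a b hk).Adj x y ↔ ∃ e, hostEdge hk e = s(x, y) := by
  rw [← SimpleGraph.mem_edgeSet, edgeSet_hostGraph, Set.mem_range]

/-- The edges of the host graph, listed without repetition. -/
noncomputable def hostEdgeEquiv (a b : ℕ) {p k : ℕ} (hk : k ≤ p) :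
    (Fin a × Fin p) ⊕ ((Fin p × Fin b) ⊕ Fin k) ≃ (hostGraph a b hk).edgeSet :=
  (Equiv.ofInjective _ (hostEdge_injective hk)).trans (Equiv.setCongr (edgeSet_hostGraph hk).symm)

lemma hostEdgeEquiv_coe {a p b k : ℕ} (hk : k ≤ p) (e) :
    ((hostEdgeEquiv a b hk e : (hostGraph a b hk).edgeSet) : Sym2 _) = hostEdge hk e := rfl

lemma ncard_edgeSet_hostGraph {a p b k : ℕ} (hk : k ≤ p) :
    (hostGraph a b hk).edgeSet.ncard = a * p + (p * b + k) := by
  rw [← Nat.card_coe_set_eq, ← Nat.card_congr (hostEdgeEquiv a b hk)]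
  simp

lemma card_hostEdge_left {a p b k : ℕ} (hk : k ≤ p) :
    Nat.card {e : (hostGraph a b hk).edgeSet // e.1.map Sum.isLeft = s(true, true)} = a * p := by
  let g : Fin a × Fin p →
      {e : (hostGraph a b hk).edgeSet // e.1.map Sum.isLeft = s(true, true)} :=
    fun x => ⟨hostEdgeEquiv a b hk (.inl x), by rw [hostEdgeEquiv_coe]; simp [hostEdge]⟩
  have hg : Function.Bijective g := by
    constructor
    · intro i j h
      simpa [g] using h
    · rintro ⟨e, he⟩
      obtain ⟨e, rfl⟩ := (hostEdgeEquiv a b hk).surjective e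
      rw [hostEdgeEquiv_coe] at he
      rcases e with e | e | e
      · exact ⟨e, rfl⟩
      · simp [hostEdge] at he
      · simp [hostEdge] at he
  rw [← Nat.card_eq_of_bijective g hg]
  simp

/-- The two-coloured edges of the host graph are those of the matching. -/
noncomputable def hostCutEquiv (a b : ℕ) {p k : ℕ} (hk : k ≤ p) :
    Fin k ≃ {e : (hostGraph a b hk).edgeSet // e.1.map Sum.isLeft = s(true, false)} :=
  Equiv.ofBijective (fun i => ⟨hostEdgeEquiv a b hk (.inr (.inr i)), by
      rw [hostEdgeEquiv_coe]; simp [hostEdge]⟩) <| by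
    constructor
    · intro i j h
      simpa using h
    · rintro ⟨e, he⟩
      obtain ⟨e, rfl⟩ := (hostEdgeEquiv a b hk).surjective e
      rw [hostEdgeEquiv_coe] at he
      rcases e with e | e | e
      · simp [hostEdge] at he
      · simp [hostEdge] at he
      · exact ⟨e, rfl⟩

lemma hostGraph_degree {a p b k d : ℕ} (hk : k ≤ p) (ha : d ≤ a) (hb : d ≤ b) (hp : d ≤ p)
    (v : HostVertex a p b) : d ≤ ((hostGraph a b hk).neighborSet v).ncard := by
  have key : ∀ (q : ℕ) (w : Fin q → HostVertex a p b), d ≤ q → Function.Injective w →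
      (∀ i, (hostGraph a b hk).Adj v (w i)) → d ≤ ((hostGraph a b hk).neighborSet v).ncard := by
    intro q w hq hw hadj
    refine hq.trans ?_
    have h := Set.ncard_le_ncard (s := Set.range w) (t := (hostGraph a b hk).neighborSet v)
      (by rintro _ ⟨i, rfl⟩; exact hadj i) (Set.toFinite _)
    rw [← Set.image_univ, Set.ncard_image_of_injective _ hw] at h
    simpa using h
  rcases v with (j | i) | (i | j)
  · exact key p (fun i => .inl (.inr i)) hp (fun _ _ h => by simpa using h)
      fun i => (hostGraph_adj hk _ _).2 ⟨.inl (j, i), rfl⟩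
  · exact key a (fun j => .inl (.inl j)) ha (fun _ _ h => by simpa using h)
      fun j => (hostGraph_adj hk _ _).2 ⟨.inl (j, i), Sym2.eq_swap⟩
  · exact key b (fun j => .inr (.inr j)) hb (fun _ _ h => by simpa using h)
      fun j => (hostGraph_adj hk _ _).2 ⟨.inr (.inl (i, j)), rfl⟩
  · exact key p (fun i => .inr (.inl i)) hp (fun _ _ h => by simpa using h)
      fun i => (hostGraph_adj hk _ _).2 ⟨.inr (.inl (i, j)), Sym2.eq_swap⟩

/-! ### Edge-connectivity -/

/-- Fewer than `k` edges cannot meet all of `k` disjoint sets of edges. -/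
lemma exists_disjoint_of_ncard_lt {α : Type*} {S : Set α} (hS : S.Finite) {k : ℕ}
    (hk : S.ncard < k) (g : Fin k → Set α)
    (hg : ∀ i j e, e ∈ g i → e ∈ g j → i = j) : ∃ i, ∀ e ∈ g i, e ∉ S := by
  by_contra! h
  choose x hx hxS using h
  have hinj : Function.Injective x := fun i j hij => hg i j (x i) (hx i) (hij ▸ hx j)
  have hle := Set.ncard_le_ncard (s := Set.range x) (by rintro _ ⟨i, rfl⟩; exact hxS i) hS
  rw [← Set.image_univ, Set.ncard_image_of_injective _ hinj] at hle
  simp at hle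
  omega

section Reachability

variable {V : Type*} {G : SimpleGraph V} {S : Set (Sym2 V)} {k : ℕ}

lemma reachable_of_common_neighbors (hS : S.Finite) (hk : S.ncard < k) {x y : V}
    (w : Fin k → V) (hw : Function.Injective w) (hx : ∀ i, G.Adj x (w i))
    (hy : ∀ i, G.Adj y (w i)) : (G.deleteEdges S).Reachable x y := by
  by_cases hxy : x = y
  · subst hxy
    exact SimpleGraph.Reachable.refl _
  obtain ⟨i, hi⟩ := exists_disjoint_of_ncard_lt hS hk (fun i => {s(x, w i), s(y, w i)}) (by
    intro i j e hi hj
    have h1 := (hx i).ne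
    have h2 := (hy i).ne
    simp only [Set.mem_insert_iff, Set.mem_singleton_iff] at hi hj
    apply hw
    rcases hi with rfl | rfl <;> rcases hj with hj | hj <;> rw [Sym2.eq_iff] at hj <;> grind)
  have h1 : (G.deleteEdges S).Adj x (w i) :=
    SimpleGraph.deleteEdges_adj.2 ⟨hx i, hi _ (by simp)⟩
  have h2 : (G.deleteEdges S).Adj y (w i) :=
    SimpleGraph.deleteEdges_adj.2 ⟨hy i, hi _ (by simp)⟩
  exact h1.reachable.trans h2.symm.reachable

lemma exists_adj_of_matching (hS : S.Finite) (hk : S.ncard < k) (x y : Fin k → V)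
    (hinj : Function.Injective fun i => s(x i, y i)) (h : ∀ i, G.Adj (x i) (y i)) :
    ∃ i, (G.deleteEdges S).Adj (x i) (y i) := by
  obtain ⟨i, hi⟩ := exists_disjoint_of_ncard_lt hS hk (fun i => {s(x i, y i)}) (by
    intro i j e hi hj
    exact hinj (hi.symm.trans hj))
  exact ⟨i, SimpleGraph.deleteEdges_adj.2 ⟨h i, hi _ rfl⟩⟩

end Reachability

lemma edgeConnected_hostGraph {a p b k : ℕ} (hk : k ≤ p) (ha : k ≤ a) (hb : k ≤ b) (h2 : 1 < p) :
    EdgeConnected (hostGraph a b hk) k := by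
  refine ⟨by simp; omega, fun S hS hSk => ?_⟩
  have hqa : ∀ j j' : Fin a, ((hostGraph a b hk).deleteEdges S).Reachable
      (.inl (.inl j)) (.inl (.inl j')) := fun j j' =>
    reachable_of_common_neighbors hS hSk (fun i => .inl (.inr (Fin.castLE hk i)))
      (fun _ _ h => by simpa using h)
      (fun i => (hostGraph_adj hk _ _).2 ⟨.inl (j, _), rfl⟩)
      (fun i => (hostGraph_adj hk _ _).2 ⟨.inl (j', _), rfl⟩)
  have hpa : ∀ i i' : Fin p, ((hostGraph a b hk).deleteEdges S).Reachable
      (.inl (.inr i)) (.inl (.inr i')) := fun i i' =>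
    reachable_of_common_neighbors hS hSk (fun j => .inl (.inl (Fin.castLE ha j)))
      (fun _ _ h => by simpa using h)
      (fun j => (hostGraph_adj hk _ _).2 ⟨.inl (_, i), Sym2.eq_swap⟩)
      (fun j => (hostGraph_adj hk _ _).2 ⟨.inl (_, i'), Sym2.eq_swap⟩)
  have hpb : ∀ i i' : Fin p, ((hostGraph a b hk).deleteEdges S).Reachable
      (.inr (.inl i)) (.inr (.inl i')) := fun i i' =>
    reachable_of_common_neighbors hS hSk (fun j => .inr (.inr (Fin.castLE hb j)))
      (fun _ _ h => by simpa using h)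
      (fun j => (hostGraph_adj hk _ _).2 ⟨.inr (.inl (i, _)), rfl⟩)
      (fun j => (hostGraph_adj hk _ _).2 ⟨.inr (.inl (i', _)), rfl⟩)
  have hqb : ∀ j j' : Fin b, ((hostGraph a b hk).deleteEdges S).Reachable
      (.inr (.inr j)) (.inr (.inr j')) := fun j j' =>
    reachable_of_common_neighbors hS hSk (fun i => .inr (.inl (Fin.castLE hk i)))
      (fun _ _ h => by simpa using h)
      (fun i => (hostGraph_adj hk _ _).2 ⟨.inr (.inl (_, j)), Sym2.eq_swap⟩)
      (fun i => (hostGraph_adj hk _ _).2 ⟨.inr (.inl (_, j')), Sym2.eq_swap⟩)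
  obtain ⟨i₁, h₁⟩ := exists_adj_of_matching (G := hostGraph a b hk) hS hSk
    (fun i => .inl (.inl (Fin.castLE ha i))) (fun i => .inl (.inr (Fin.castLE hk i)))
    (fun _ _ h => by simpa using h) (fun i => (hostGraph_adj hk _ _).2 ⟨.inl (_, _), rfl⟩)
  obtain ⟨i₂, h₂⟩ := exists_adj_of_matching (G := hostGraph a b hk) hS hSk
    (fun i => .inl (.inr (Fin.castLE hk i))) (fun i => .inr (.inl (Fin.castLE hk i)))
    (fun _ _ h => by simpa using h) (fun i => (hostGraph_adj hk _ _).2 ⟨.inr (.inr i), rfl⟩)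
  obtain ⟨i₃, h₃⟩ := exists_adj_of_matching (G := hostGraph a b hk) hS hSk
    (fun i => .inr (.inl (Fin.castLE hk i))) (fun i => .inr (.inr (Fin.castLE hb i)))
    (fun _ _ h => by simpa using h) (fun i => (hostGraph_adj hk _ _).2 ⟨.inr (.inl (_, _)), rfl⟩)
  have hall : ∀ v, ((hostGraph a b hk).deleteEdges S).Reachable v
      (.inl (.inr (Fin.castLE hk i₂))) := by
    rintro ((j | i) | (i | j))
    · exact (hqa _ _).trans (h₁.reachable.trans (hpa _ _))
    · exact hpa _ _
    · exact (hpb _ _).trans h₂.symm.reachable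
    · exact (hqb _ _).trans (h₃.symm.reachable.trans ((hpb _ _).trans h₂.symm.reachable))
  exact (SimpleGraph.connected_iff _).2
    ⟨fun x y => (hall x).trans (hall y).symm, ⟨.inl (.inr ⟨0, by omega⟩)⟩⟩

/-! ### Invariance under isomorphism -/

section Transfer

variable {V V' : Type*} {G : SimpleGraph V} {G' : SimpleGraph V'}

lemma EdgeConnected.of_iso [Fintype V] [Fintype V'] (φ : G ≃g G') {k : ℕ}
    (h : EdgeConnected G k) : EdgeConnected G' k := by
  refine ⟨(Fintype.card_congr φ.toEquiv) ▸ h.1, fun S hS hk => ?_⟩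
  have hinj : Function.Injective (Sym2.map φ) := Sym2.map.injective φ.injective
  have hconn := h.2 (Sym2.map φ ⁻¹' S) (hS.preimage hinj.injOn)
    ((Set.ncard_preimage_of_injective_subset_range hinj fun e _ => by
      induction e with | _ x y
      exact ⟨s(φ.symm x, φ.symm y), by simp⟩).trans_lt hk)
  let ψ : G.deleteEdges (Sym2.map φ ⁻¹' S) ≃g G'.deleteEdges S :=
    ⟨φ.toEquiv, by
      intro x y
      simp only [SimpleGraph.deleteEdges_adj, Set.mem_preimage, Sym2.map_mk]
      exact and_congr φ.map_adj_iff Iff.rfl⟩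
  exact ψ.connected_iff.1 hconn

lemma HasDecompInto.of_iso {W : Type*} {H : SimpleGraph W} (φ : G ≃g G')
    (h : HasDecompInto G H) : HasDecompInto G' H := by
  have hinj : Function.Injective (Sym2.map φ) := Sym2.map.injective φ.injective
  have himg : Sym2.map φ '' G.edgeSet = G'.edgeSet := by
    ext e
    constructor
    · rintro ⟨e, he, rfl⟩
      induction e with | _ x y
      exact φ.map_adj_iff.2 he
    · intro he
      induction e with | _ x y
      exact ⟨s(φ.symm x, φ.symm y), φ.symm.map_adj_iff.2 he, by simp⟩
  obtain ⟨N, P, hne, hdisj, hunion, hcopy⟩ := h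
  refine ⟨N, fun i => Sym2.map φ '' P i, fun i => (hne i).image _, fun i j hij =>
    (Set.disjoint_image_iff hinj).2 (hdisj hij), ?_, fun i => ⟨?_, ?_⟩⟩
  · rw [← Set.image_iUnion, hunion, himg]
  · rw [← himg]
    exact Set.image_mono (hcopy i).1
  · obtain ⟨f, hf⟩ := (hcopy i).2
    refine ⟨f.trans φ.toEquiv.toEmbedding, ?_⟩
    simp only [hf, Set.image_image]
    refine Set.image_congr fun e _ => ?_
    rw [Sym2.map_map]
    rfl

end Transfer

/-! ### Choice of the parameters -/

/-- The number of sums of `k` edge weights is eventually smaller than the size of the tree. -/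
lemma exists_large_level (k : ℕ) : ∃ n, 3 ≤ n ∧ (n * 2) ^ k < 2 ^ n - 2 := by
  have ht := tendsto_pow_const_div_const_pow_of_one_lt k (r := (2 : ℝ)) (by norm_num)
  have hev := ht.eventually (gt_mem_nhds (show (0 : ℝ) < 1 / (2 ^ k + 2) by positivity))
  obtain ⟨n, hn, h3⟩ := (hev.and (Filter.eventually_ge_atTop 3)).exists
  refine ⟨n, h3, ?_⟩
  rw [div_lt_div_iff₀ (by positivity) (by positivity), one_mul] at hn
  have h : n ^ k * (2 ^ k + 2) < 2 ^ n := by exact_mod_cast hn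
  have h1 : 1 ≤ n ^ k := Nat.one_le_pow _ _ (by omega)
  rw [mul_pow]
  rw [mul_add] at h
  omega

/-- Disproof of the conjecture: for every function `f` from the positive integers to the
positive integers, there are a tree `T` of maximum degree `3` and a graph `G` which is
`f(3)`-edge-connected, has minimum degree at least `f(|E(T)|)` and number of edges
divisible by `|E(T)|`, yet admits no `T`-decomposition. -/
theorem conjecture_disproof (f : ℕ → ℕ) (hf : ∀ n : ℕ, 0 < n → 0 < f n) :
    ∃ (nT : ℕ) (T : SimpleGraph (Fin nT)) (nG : ℕ) (G : SimpleGraph (Fin nG)),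
      T.IsTree ∧
      (∀ w, (T.neighborSet w).ncard ≤ 3) ∧ (∃ w, (T.neighborSet w).ncard = 3) ∧
      EdgeConnected G (f 3) ∧
      (∀ v, f T.edgeSet.ncard ≤ (G.neighborSet v).ncard) ∧
      T.edgeSet.ncard ∣ G.edgeSet.ncard ∧
      ¬ HasDecompInto G T := by
  obtain ⟨n, hn3, hlarge⟩ := exists_large_level (f 3)
  set k := f 3
  obtain ⟨m, hm⟩ : ∃ m, m = 2 ^ n - 2 := ⟨_, rfl⟩
  rw [← hm] at hlarge
  have hm4 : 4 ≤ m := by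
    have := Nat.pow_le_pow_right (n := 2) (by norm_num) hn3
    omega
  have : NeZero m := ⟨by omega⟩
  set d := f m
  -- A residue `r` that is not a sum of `k` edge weights.
  obtain ⟨r, hr⟩ : ∃ r : ZMod m, ∀ g : Fin k → Fin n × Bool, ∑ i, edgeWeight n m (g i) ≠ r := by
    by_contra! h
    have hcard := Fintype.card_le_of_surjective
      (fun g : Fin k → Fin n × Bool => ∑ i, edgeWeight n m (g i)) h
    simp only [ZMod.card, Fintype.card_fun, Fintype.card_prod, Fintype.card_fin,
      Fintype.card_bool] at hcard
    omega
  -- Part sizes with `p ≡ 1`, `a ≡ r` and `b ≡ - k - r` modulo `m`, all at least `k` and `d`.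
  have hbig : k + d + 1 ≤ m * (k + d + 1) := Nat.le_mul_of_pos_left _ (by omega)
  obtain ⟨p, hp⟩ : ∃ p, p = 1 + m * (k + d + 1) := ⟨_, rfl⟩
  obtain ⟨a, ha⟩ : ∃ a, a = r.val + m * (k + d + 1) := ⟨_, rfl⟩
  obtain ⟨b, hb⟩ : ∃ b, b = (-(k : ZMod m) - r).val + m * (k + d + 1) := ⟨_, rfl⟩
  have hpm : (p : ZMod m) = 1 := by rw [hp]; simp
  have ham : (a : ZMod m) = r := by rw [ha]; simp
  have hbm : (b : ZMod m) = -(k : ZMod m) - r := by rw [hb]; simp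
  have hk : k ≤ p := by omega
  let φ := (hostGraph a b hk).overFinIso rfl
  refine ⟨m + 1, heapTree m, _, (hostGraph a b hk).overFin rfl, heapTree_isTree m,
    heapTree_degree_le m, ⟨_, heapTree_degree_one m hm4⟩,
    (edgeConnected_hostGraph hk (by omega) (by omega) (by omega)).of_iso φ, ?_, ?_, ?_⟩
  · intro v
    rw [ncard_edgeSet_heapTree, ← Nat.card_coe_set_eq, ← Nat.card_congr
      (φ.symm.mapNeighborSet v).symm, Nat.card_coe_set_eq]
    exact hostGraph_degree hk (by omega) (by omega) (by omega) _
  · rw [ncard_edgeSet_heapTree, ← Nat.card_coe_set_eq, ← Nat.card_congr φ.mapEdgeSet,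
      Nat.card_coe_set_eq, ncard_edgeSet_hostGraph, ← ZMod.natCast_eq_zero_iff]
    push_cast
    rw [hpm, ham, hbm]
    ring
  · intro hdec
    obtain ⟨g, hg⟩ := decomp_count _ n m (by omega) hm (hdec.of_iso φ.symm) Sum.isLeft
    rw [card_hostEdge_left, ← finsum_comp_equiv (hostCutEquiv a b hk),
      finsum_eq_sum_of_fintype] at hg
    push_cast at hg
    rw [ham, hpm, mul_one] at hg
    exact hr _ hg.symm
end

section
/- Let k be a positive integer and let G be a multigraph. Then there exists a cut (A, B) in G of order at most 2k such that the induced submultigraph G[A] is k-edge-connected or consists of a single vertex. -/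
/-!
Choose a nonempty vertex set `A` with boundary of order at most `2k` and minimal under
inclusion; such sets exist because the whole vertex set has empty boundary. Suppose `A` has at
least two vertices and `G[A]` is disconnected by deleting a set `S` of fewer than `k` edges. Then
`A` splits into nonempty parts `B`, `C` such that all edges between them lie in `S`, and
`d(B) + d(C) ≤ d(A) + 2|S| ≤ 4k - 2`. So `d(B) ≤ 2k` or `d(C) ≤ 2k`, against minimality.
-/

open SimpleGraph

/-- A multigraph on vertex type `V` with edge-index type `E`: every edge (possibly a loop)
is given by its pair of endpoints. -/
structure Multigraph (V : Type*) (E : Type*) where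
  ends : E → Sym2 V

namespace Multigraph

variable {V E : Type*}

/-- The simple graph on the vertex subset `A` whose adjacencies are realized by the
edges in the set `F`. -/
def simpleOn (G : Multigraph V E) (A : Set V) (F : Set E) : SimpleGraph A :=
  SimpleGraph.fromRel (fun a b => ∃ e ∈ F, G.ends e = s(a.1, b.1))

/-- The spanning submultigraph of `G` with edge set `F` is `k`-edge-connected: there are
at least two vertices and after deleting any set of fewer than `k` edges it stays
connected. -/
def EdgeConnectedSub [Fintype V] (G : Multigraph V E) (F : Set E) (k : ℕ) : Prop :=
  1 < Fintype.card V ∧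
    ∀ S : Set E, S.Finite → S.ncard < k → (G.simpleOn Set.univ (F \ S)).Connected

/-- The multigraph `G` is `k`-edge-connected. -/
def EdgeConnected [Fintype V] (G : Multigraph V E) (k : ℕ) : Prop :=
  G.EdgeConnectedSub Set.univ k

/-- The induced submultigraph `G[A]` is `k`-edge-connected. -/
def EdgeConnectedOn (G : Multigraph V E) (A : Set V) (k : ℕ) : Prop :=
  1 < A.ncard ∧
    ∀ S : Set E, S.Finite → S.ncard < k → (G.simpleOn A Sᶜ).Connected

/-- The degree of `v` in the spanning submultigraph of `G` with edge set `F`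
(a loop at `v` contributes `2`). -/
noncomputable def degOn (G : Multigraph V E) (F : Set E) (v : V) : ℕ :=
  {e ∈ F | v ∈ G.ends e}.ncard + {e ∈ F | G.ends e = s(v, v)}.ncard

/-- The degree of `v` in `G` (a loop at `v` contributes `2`). -/
noncomputable def deg (G : Multigraph V E) (v : V) : ℕ :=
  G.degOn Set.univ v

/-- `T` (a set of edges of `G`) is a spanning tree of `G`: it has no loops, no two of its
edges are parallel, and the corresponding simple graph on all of `V` is connected and
acyclic. -/
def IsSpanningTree (G : Multigraph V E) (T : Set E) : Prop :=
  (∀ e ∈ T, ¬ (G.ends e).IsDiag) ∧ Set.InjOn G.ends T ∧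
    (G.simpleOn Set.univ T).Connected ∧ (G.simpleOn Set.univ T).IsAcyclic

end Multigraph

namespace Multigraph

/-- The boundary of `A`: the edges with exactly one endpoint in `A`. -/
def boundary {V E : Type*} (G : Multigraph V E) (A : Set V) : Set E :=
  {e : E | ∃ u ∈ A, ∃ w ∈ Aᶜ, G.ends e = s(u, w)}

/-- If all edges between disjoint sets `B` and `C` lie in `S`, then `S` contains the edges counted
twice in `d(B) + d(C)` and those counted there but not in `d(B ∪ C)`. -/
lemma ncard_boundary_add_le {V E : Type*} [Finite E] (G : Multigraph V E) {B C : Set V}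
    (hBC : Disjoint B C) {S : Set E}
    (hS : ∀ e, ∀ u ∈ B, ∀ w ∈ C, G.ends e = s(u, w) → e ∈ S) :
    (G.boundary B).ncard + (G.boundary C).ncard ≤ (G.boundary (B ∪ C)).ncard + 2 * S.ncard := by
  have hd : ∀ x, x ∈ B → x ∉ C := fun x hx hx' => Set.disjoint_left.mp hBC hx hx'
  have hu : G.boundary B ∪ G.boundary C ⊆ G.boundary (B ∪ C) ∪ S := by
    rintro e (⟨u, hu, w, hw, he⟩ | ⟨u, hu, w, hw, he⟩)
    · by_cases hwC : w ∈ C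
      · exact Or.inr (hS e u hu w hwC he)
      · exact Or.inl ⟨u, Or.inl hu, w, fun h => h.elim hw hwC, he⟩
    · by_cases hwB : w ∈ B
      · exact Or.inr (hS e w hwB u hu (he.trans Sym2.eq_swap))
      · exact Or.inl ⟨u, Or.inr hu, w, fun h => h.elim hwB hw, he⟩
  have hi : G.boundary B ∩ G.boundary C ⊆ S := by
    rintro e ⟨⟨u, hu, w, hw, he⟩, ⟨u', hu', w', hw', he'⟩⟩
    rw [he, Sym2.eq_iff] at he'
    rcases he' with ⟨rfl, rfl⟩ | ⟨rfl, rfl⟩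
    · exact absurd hu' (hd _ hu)
    · exact hS e u hu w hu' he
  have h1 := Set.ncard_union_add_ncard_inter (G.boundary B) (G.boundary C)
  have h2 := Set.ncard_le_ncard hu
  have h3 := Set.ncard_le_ncard hi
  have h4 := Set.ncard_union_le (G.boundary (B ∪ C)) S
  omega

/-- Here `B` can be taken to be the set of vertices reachable in `G[A] - S` from a fixed vertex
of `A`. -/
lemma exists_partition_of_not_connected {V E : Type*} (G : Multigraph V E) {A : Set V}
    (hA : A.Nonempty) {S : Set E} (h : ¬ (G.simpleOn A Sᶜ).Connected) :
    ∃ B C : Set V, B.Nonempty ∧ C.Nonempty ∧ Disjoint B C ∧ B ∪ C = A ∧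
      ∀ e, ∀ u ∈ B, ∀ w ∈ C, G.ends e = s(u, w) → e ∈ S := by
  obtain ⟨a, ha⟩ := hA
  set H := G.simpleOn A Sᶜ with hH
  have hc : ∃ c : A, ¬ H.Reachable ⟨a, ha⟩ c := by
    by_contra! hc
    exact h ((SimpleGraph.connected_iff_exists_forall_reachable H).mpr ⟨_, hc⟩)
  obtain ⟨c, hc⟩ := hc
  let R : Set A := {x | H.Reachable ⟨a, ha⟩ x}
  refine ⟨Set.image Subtype.val R, Set.image Subtype.val Rᶜ,
    ⟨a, ⟨a, ha⟩, SimpleGraph.Reachable.refl _, rfl⟩,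
    ⟨c, c, hc, rfl⟩, ?_, ?_, ?_⟩
  · exact (Set.disjoint_image_iff Subtype.val_injective).mpr disjoint_compl_right
  · rw [← Set.image_union, Set.union_compl_self, Set.image_univ, Subtype.range_coe]
  · rintro e _ ⟨u, hu, rfl⟩ _ ⟨w, hw, rfl⟩ he
    by_contra heS
    have hne : u ≠ w := by
      rintro rfl
      exact hw hu
    have hadj : H.Adj u w := by
      rw [hH, simpleOn, SimpleGraph.fromRel_adj]
      exact ⟨hne, Or.inl ⟨e, heS, he⟩⟩
    exact hw (SimpleGraph.Reachable.trans hu hadj.reachable)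

end Multigraph

open Multigraph in
/-- For every positive integer `k` and every multigraph `G`, there is a cut `(A, Aᶜ)` of
order at most `2k` such that the induced submultigraph `G[A]` is `k`-edge-connected or
consists of a single vertex. -/
theorem exists_small_cut_with_connected_side {V E : Type} [Fintype V] [Fintype E]
    [Nonempty V] (k : ℕ) (hk : 0 < k) (G : Multigraph V E) :
    ∃ A : Set V, A.Nonempty ∧
      {e : E | ∃ u ∈ A, ∃ w ∈ Aᶜ, G.ends e = s(u, w)}.ncard ≤ 2 * k ∧
      (G.EdgeConnectedOn A k ∨ ∃ v : V, A = {v}) := by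
  obtain ⟨A, ⟨hA, hAk⟩, hmin⟩ := exists_minimal_of_wellFoundedLT
    (fun A : Set V => A.Nonempty ∧ (G.boundary A).ncard ≤ 2 * k)
    ⟨Set.univ, Set.univ_nonempty, by simp [boundary]⟩
  refine ⟨A, hA, hAk, ?_⟩
  by_cases hcard : 1 < A.ncard
  · refine Or.inl ⟨hcard, fun S _ hSk => ?_⟩
    by_contra hcon
    obtain ⟨B, C, hB, hC, hBC, rfl, hS⟩ := G.exists_partition_of_not_connected hA hcon
    have hle := G.ncard_boundary_add_le hBC hS
    rcases le_or_gt (G.boundary B).ncard (2 * k) with h | h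
    · obtain ⟨c, hc⟩ := hC
      exact Set.disjoint_left.mp hBC (hmin ⟨hB, h⟩ Set.subset_union_left (Or.inr hc)) hc
    · obtain ⟨b, hb⟩ := hB
      exact Set.disjoint_left.mp hBC hb
        (hmin ⟨hC, by omega⟩ Set.subset_union_right (Or.inl hb))
  · right
    have := hA.ncard_pos
    exact Set.ncard_eq_one.mp (by omega)
end

section
/- For any positive integers k0 and δ0, there exists d0 such that the edge set of every 16·k0-edge-connected multigraph G with minimum degree at least d0 can be partitioned into two spanning subgraphs, one of which is k0-edge-connected and the other of which has minimum degree at least δ0. -/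
/-!
The theorem is an instance of matroid union. Besides `k₀` disjoint spanning trees we want, disjoint
from them, a set of edges that can be assigned to their endpoints so that every vertex receives
`δ₀` of them. Edge sets with such an assignment in which no vertex receives more than `δ₀` edges
form a transversal matroid, so the union of `k₀` graphic matroids with this one must have rank
`k₀ (n - 1) + δ₀ n`. By the rank formula this says that every edge set `J` satisfies
`k₀ (c(J) - 1) + δ₀ u(J) ≤ |E \ J|`, where `c(J)` counts the components of `J` and `u(J)` the
vertices that `J` leaves uncovered (`count_bound`). If `J` is not connected, each component of `J`
meets at least `2 k₀` edges outside `J` by edge-connectivity, and an uncovered vertex is a component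
all of whose (at least `2 (k₀ + δ₀)`) edge ends lie on edges outside `J`; summing over the components
counts every edge outside `J` twice.

The union theorem itself is replaced by a form of Rado's theorem for a monotone submodular function
(`rado`). Every edge `e` chooses either a tree index, or a slot `(v, j)` with `v` an end of `e` and
`j < δ₀`, or a joker whose weight is the number of superfluous edges. The rank of a choice is the sum
of the graphic ranks, the number of slots used and the weight of the joker; when it reaches `|E|`,
all trees span and all slots are filled.

The graphic rank of `J` is taken to be `n - dim K(J)`, where `K(J)` is the space of functions
`V → ℚ` that agree at the two ends of each edge of `J`. Submodularity is then the dimension formula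
for subspaces, and the components of `J` are the classes of vertices not separated by `K(J)`, so
that no walks in `J` are needed.
-/

open SimpleGraph

/-! ### Rado's theorem for submodular functions -/

/-- Rado's theorem for a monotone submodular function `f`: if `f` is at least `|J|` on the union of
the sets indexed by `J`, for every `J`, then there is a choice of elements on whose range `f` is at
least the number of sets. A set with two elements can always lose one of them: violations caused by
both deletions would contradict submodularity. -/
theorem rado {ι α : Type*} [Fintype ι] [DecidableEq ι] [DecidableEq α]
    (f : Finset α → ℤ) (h0 : f ∅ ≤ 0) (hmono : ∀ P Q, P ⊆ Q → f P ≤ f Q)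
    (hsub : ∀ P Q, f (P ∪ Q) + f (P ∩ Q) ≤ f P + f Q) :
    ∀ (N : ℕ) (A : ι → Finset α), ∑ i, (A i).card = N →
      (∀ J : Finset ι, (J.card : ℤ) ≤ f (J.biUnion A)) →
      ∃ φ : ι → α, (∀ i, φ i ∈ A i) ∧ (Fintype.card ι : ℤ) ≤ f (Finset.univ.image φ) := by
  intro N
  induction N using Nat.strong_induction_on with
  | _ N ih =>
  intro A hN hA
  by_cases hbig : ∃ i, ∃ x ∈ A i, ∃ y ∈ A i, x ≠ y
  · obtain ⟨i, x, hx, y, hy, hxy⟩ := hbig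
    have key : ∀ z ∈ A i,
        (∀ J : Finset ι, (J.card : ℤ) ≤ f (J.biUnion (Function.update A i ((A i).erase z)))) →
        ∃ φ : ι → α, (∀ i, φ i ∈ A i) ∧ (Fintype.card ι : ℤ) ≤ f (Finset.univ.image φ) := by
      intro z hz hJ
      have hle : ∀ j, Function.update A i ((A i).erase z) j ⊆ A j := by
        intro j
        by_cases hj : j = i
        · subst hj
          simpa using Finset.erase_subset _ _
        · simp [hj]
      have hlt : ∑ j, (Function.update A i ((A i).erase z) j).card < N := by
        rw [← hN]
        refine Finset.sum_lt_sum (fun j _ => Finset.card_le_card (hle j)) ⟨i, Finset.mem_univ _, ?_⟩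
        simpa using Finset.card_erase_lt_of_mem hz
      obtain ⟨φ, h1, h2⟩ := ih _ hlt _ rfl hJ
      exact ⟨φ, fun j => hle j (h1 j), h2⟩
    -- A violating index set contains `i`; the remaining indices are returned.
    have viol : ∀ z, (¬ ∀ J : Finset ι,
          (J.card : ℤ) ≤ f (J.biUnion (Function.update A i ((A i).erase z)))) →
        ∃ J : Finset ι, i ∉ J ∧ f (J.biUnion A ∪ (A i).erase z) ≤ J.card := by
      intro z h
      push Not at h
      obtain ⟨J, hJ⟩ := h
      have hoff : ∀ J' : Finset ι, i ∉ J' →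
          J'.biUnion (Function.update A i ((A i).erase z)) = J'.biUnion A := by
        intro J' hi
        refine Finset.biUnion_congr rfl fun j hj => ?_
        rw [Function.update_of_ne]
        rintro rfl
        exact hi hj
      by_cases hi : i ∈ J
      · refine ⟨J.erase i, by simp, ?_⟩
        rw [← Finset.insert_erase hi, Finset.biUnion_insert, hoff _ (by simp),
          Finset.card_insert_of_notMem (by simp), Function.update_self, Finset.union_comm] at hJ
        push_cast at hJ
        omega
      · rw [hoff J hi] at hJ
        exact absurd (hA J) (not_le.mpr hJ)
    by_cases h1 : ∀ J : Finset ι,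
        (J.card : ℤ) ≤ f (J.biUnion (Function.update A i ((A i).erase x)))
    · exact key x hx h1
    by_cases h2 : ∀ J : Finset ι,
        (J.card : ℤ) ≤ f (J.biUnion (Function.update A i ((A i).erase y)))
    · exact key y hy h2
    exfalso
    obtain ⟨J, hiJ, hJ⟩ := viol x h1
    obtain ⟨L, hiL, hL⟩ := viol y h2
    have e1 := hsub (J.biUnion A ∪ (A i).erase x) (L.biUnion A ∪ (A i).erase y)
    have e2 := hA (insert i (J ∪ L))
    have e3 := hA (J ∩ L)
    have e4 : f ((insert i (J ∪ L)).biUnion A) ≤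
        f ((J.biUnion A ∪ (A i).erase x) ∪ (L.biUnion A ∪ (A i).erase y)) := by
      apply hmono
      intro a ha
      simp only [Finset.mem_biUnion, Finset.mem_insert, Finset.mem_union, Finset.mem_erase] at ha ⊢
      grind
    have e5 : f ((J ∩ L).biUnion A) ≤
        f ((J.biUnion A ∪ (A i).erase x) ∩ (L.biUnion A ∪ (A i).erase y)) := by
      apply hmono
      intro a ha
      simp only [Finset.mem_biUnion, Finset.mem_inter, Finset.mem_union, Finset.mem_erase] at ha ⊢
      grind
    rw [Finset.card_insert_of_notMem (by simp [hiJ, hiL])] at e2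
    have e6 := Finset.card_union_add_card_inter J L
    push_cast at e2
    omega
  · push Not at hbig
    have hne : ∀ i, (A i).Nonempty := by
      intro i
      by_contra h
      have h1 := hA {i}
      simp only [Finset.card_singleton, Finset.singleton_biUnion,
        Finset.not_nonempty_iff_eq_empty.mp h] at h1
      push_cast at h1
      omega
    choose φ hφ using hne
    refine ⟨φ, hφ, (hA Finset.univ).trans (hmono _ _ ?_)⟩
    intro a ha
    simp only [Finset.mem_biUnion, Finset.mem_univ, true_and] at ha
    obtain ⟨i, hi⟩ := ha
    exact Finset.mem_image.mpr ⟨i, Finset.mem_univ _, hbig i _ (hφ i) _ hi⟩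

namespace Multigraph

variable {V E : Type*}

/-! ### The graphic rank through locally constant functions -/

/-- The rational functions on the vertices that take equal values at the two ends of every edge
of `J`, i.e. that are constant on the components of `J`. -/
def locConst (G : Multigraph V E) (J : Set E) : Submodule ℚ (V → ℚ) where
  carrier := {g | ∀ e ∈ J, ∀ a b, G.ends e = s(a, b) → g a = g b}
  add_mem' := by
    intro g h hg hh e he a b hab
    simp [hg e he a b hab, hh e he a b hab]
  zero_mem' := by intro e _ a b _; rfl
  smul_mem' := by
    intro c g hg e he a b hab
    simp [hg e he a b hab]

theorem mem_locConst {G : Multigraph V E} {J : Set E} {g : V → ℚ} :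
    g ∈ G.locConst J ↔ ∀ e ∈ J, ∀ a b, G.ends e = s(a, b) → g a = g b := Iff.rfl

theorem locConst_anti (G : Multigraph V E) {J L : Set E} (h : J ⊆ L) :
    G.locConst L ≤ G.locConst J := fun _ hg e he => hg e (h he)

theorem locConst_union (G : Multigraph V E) (J L : Set E) :
    G.locConst (J ∪ L) = G.locConst J ⊓ G.locConst L := by
  ext g
  simp only [Submodule.mem_inf, mem_locConst, Set.mem_union]
  grind

/-- The graphic rank, number of vertices minus number of components, of an edge set. -/
noncomputable def gRank [Fintype V] (G : Multigraph V E) (J : Set E) : ℤ :=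
  (Fintype.card V : ℤ) - Module.finrank ℚ (G.locConst J)

theorem gRank_mono [Fintype V] (G : Multigraph V E) {J L : Set E} (h : J ⊆ L) :
    G.gRank J ≤ G.gRank L := by
  have := Submodule.finrank_mono (G.locConst_anti h)
  unfold gRank
  omega

theorem gRank_submodular [Fintype V] (G : Multigraph V E) (J L : Set E) :
    G.gRank (J ∪ L) + G.gRank (J ∩ L) ≤ G.gRank J + G.gRank L := by
  have h1 := Submodule.finrank_sup_add_finrank_inf_eq (G.locConst J) (G.locConst L)
  have h2 : G.locConst J ⊔ G.locConst L ≤ G.locConst (J ∩ L) :=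
    sup_le (G.locConst_anti Set.inter_subset_left) (G.locConst_anti Set.inter_subset_right)
  have h3 := Submodule.finrank_mono h2
  unfold gRank
  rw [locConst_union]
  omega

theorem gRank_nonneg [Fintype V] (G : Multigraph V E) (J : Set E) : 0 ≤ G.gRank J := by
  have := Submodule.finrank_le (G.locConst J)
  rw [Module.finrank_fintype_fun_eq_card] at this
  unfold gRank
  omega

theorem gRank_empty [Fintype V] (G : Multigraph V E) : G.gRank ∅ = 0 := by
  have : G.locConst ∅ = ⊤ := by
    ext g
    simp [mem_locConst]
  unfold gRank
  rw [this, finrank_top, Module.finrank_fintype_fun_eq_card]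
  omega

theorem one_mem_locConst (G : Multigraph V E) (J : Set E) : (1 : V → ℚ) ∈ G.locConst J :=
  fun _ _ _ _ _ => rfl

theorem gRank_le [Fintype V] [Nonempty V] (G : Multigraph V E) (J : Set E) :
    G.gRank J ≤ (Fintype.card V : ℤ) - 1 := by
  have : 0 < Module.finrank ℚ (G.locConst J) := by
    have : Nontrivial (G.locConst J) :=
      ⟨⟨1, G.one_mem_locConst J⟩, 0, fun h => one_ne_zero (congrArg Subtype.val h)⟩
    exact Module.finrank_pos
  unfold gRank
  omega

/-- An edge set of full graphic rank has an edge in every cut. -/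
theorem exists_crossing [Fintype V] (G : Multigraph V E) (J : Set E)
    (h : (Fintype.card V : ℤ) - 1 ≤ G.gRank J) (T : Set V) {x y : V} (hx : x ∈ T) (hy : y ∉ T) :
    ∃ e ∈ J, ∃ a ∈ T, ∃ b ∉ T, G.ends e = s(a, b) := by
  classical
  by_contra hcon
  push Not at hcon
  have hT : (fun v => if v ∈ T then (1 : ℚ) else 0) ∈ G.locConst J := by
    intro e he a b hab
    by_cases ha : a ∈ T <;> by_cases hb : b ∈ T <;> simp only [ha, hb, if_true, if_false]
    · exact absurd hab (hcon e he a ha b hb)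
    · exact absurd (hab.trans Sym2.eq_swap) (hcon e he b hb a ha)
  have hle : Module.finrank ℚ (G.locConst J) ≤ 1 := by
    unfold gRank at h
    omega
  obtain ⟨g, hg⟩ := finrank_le_one_iff.mp hle
  obtain ⟨c, hc⟩ := hg ⟨1, G.one_mem_locConst J⟩
  obtain ⟨c', hc'⟩ := hg ⟨_, hT⟩
  have hc := congrArg Subtype.val hc
  have hc' := congrArg Subtype.val hc'
  have h1 := congrFun hc x
  have h2 := congrFun hc y
  have h3 := congrFun hc' x
  have h4 := congrFun hc' y
  simp [hx, hy] at h1 h2 h3 h4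
  rcases h4 with h4 | h4
  · simp [h4] at h3
  · simp [h4] at h2

/-! ### Counting the edges outside an edge set -/

/-- Two vertices are equivalent if no locally constant function separates them; the classes are
the components of `J`. -/
def compSetoid (G : Multigraph V E) (J : Set E) : Setoid V where
  r a b := ∀ g ∈ G.locConst J, g a = g b
  iseqv := ⟨fun _ _ _ => rfl, fun h g hg => (h g hg).symm,
    fun h h' g hg => (h g hg).trans (h' g hg)⟩

theorem finrank_locConst_le [Fintype V] (G : Multigraph V E) (J : Set E)
    [Fintype (Quotient (G.compSetoid J))] :
    Module.finrank ℚ (G.locConst J) ≤ Fintype.card (Quotient (G.compSetoid J)) := by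
  -- A locally constant function is determined by its values on representatives.
  let ev : G.locConst J →ₗ[ℚ] (Quotient (G.compSetoid J) → ℚ) :=
    { toFun := fun g C => g.1 C.out
      map_add' := fun _ _ => rfl
      map_smul' := fun _ _ => rfl }
  have hinj : Function.Injective ev := by
    intro g h hgh
    ext v
    have h1 : (G.compSetoid J) (Quotient.mk (G.compSetoid J) v).out v :=
      Quotient.exact (Quotient.out_eq _)
    have h2 := congrFun hgh (Quotient.mk (G.compSetoid J) v)
    have h2 : g.1 (Quotient.mk (G.compSetoid J) v).out =
      h.1 (Quotient.mk (G.compSetoid J) v).out := h2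
    rw [h1 g.1 g.2, h1 h.1 h.2] at h2
    exact h2
  have := LinearMap.finrank_le_finrank_of_injective hinj
  rwa [Module.finrank_fintype_fun_eq_card] at this

open Classical in
/-- The number of ends of the edge `e` at `v`; a loop has two. -/
noncomputable def inc (G : Multigraph V E) (e : E) (v : V) : ℕ :=
  (if v ∈ G.ends e then 1 else 0) + (if G.ends e = s(v, v) then 1 else 0)

theorem sum_inc [Fintype V] (G : Multigraph V E) (e : E) : ∑ v, G.inc e v = 2 := by
  classical
  unfold inc
  rw [Finset.sum_add_distrib, ← Finset.card_filter, ← Finset.card_filter]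
  induction h : G.ends e with
  | _ a b =>
  by_cases hab : a = b
  · subst hab
    have h1 : (Finset.univ.filter fun v => v ∈ s(a, a)) = {a} := by ext; simp
    have h2 : (Finset.univ.filter fun v => s(a, a) = s(v, v)) = {a} := by
      ext
      simp [eq_comm]
    rw [h1, h2]
    simp
  · have h1 : (Finset.univ.filter fun v => v ∈ s(a, b)) = {a, b} := by ext; simp
    have h2 : (Finset.univ.filter fun v => s(a, b) = s(v, v)) = ∅ := by
      ext v
      simp
      grind
    rw [h1, h2, Finset.card_pair hab]
    simp

theorem deg_eq_sum_inc [Fintype E] (G : Multigraph V E) (v : V) :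
    G.deg v = ∑ e, G.inc e v := by
  classical
  unfold deg degOn inc
  rw [Finset.sum_add_distrib, ← Finset.card_filter, ← Finset.card_filter,
    Set.ncard_eq_toFinset_card', Set.ncard_eq_toFinset_card']
  simp

/-- In a `k`-edge-connected multigraph every cut has at least `k` edges. -/
theorem EdgeConnected.le_cut [Fintype V] [Fintype E] {G : Multigraph V E} {k : ℕ}
    (h : G.EdgeConnected k) (T : Set V) {x y : V} (hx : x ∈ T) (hy : y ∉ T) :
    k ≤ {e | ∃ a ∈ T, ∃ b ∉ T, G.ends e = s(a, b)}.ncard := by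
  by_contra hlt
  have hc := h.2 _ (Set.toFinite _) (not_le.mp hlt)
  have hr := hc.preconnected ⟨x, trivial⟩ ⟨y, trivial⟩
  rw [SimpleGraph.reachable_iff_reflTransGen] at hr
  have : ∀ z, Relation.ReflTransGen (G.simpleOn Set.univ
      (Set.univ \ {e | ∃ a ∈ T, ∃ b ∉ T, G.ends e = s(a, b)})).Adj ⟨x, trivial⟩ z → z.1 ∈ T := by
    intro z hz
    induction hz with
    | refl => exact hx
    | @tail b c _ hbc ih =>
      by_contra hcT
      rw [simpleOn, SimpleGraph.fromRel_adj] at hbc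
      rcases hbc.2 with ⟨e, he, hee⟩ | ⟨e, he, hee⟩
      · exact he.2 ⟨_, ih, _, hcT, hee⟩
      · exact he.2 ⟨_, ih, _, hcT, hee.trans Sym2.eq_swap⟩
  exact hy (this _ hr)

open Classical in
/-- The rank condition of matroid union: `k (c(J) - 1) + δ u(J) ≤ |E \ J|`, with `u(J)` the number
of vertices uncovered by `J`. -/
theorem count_bound [Fintype V] [Fintype E] (G : Multigraph V E) (k δ : ℕ)
    (hG : G.EdgeConnected (16 * k)) (hdeg : ∀ v, 2 * (k + δ) ≤ G.deg v) (J : Finset E) :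
    (k : ℤ) * ((Fintype.card V : ℤ) - 1 - G.gRank J) +
      δ * ((Finset.univ.filter fun v => ∀ e ∈ J, v ∉ G.ends e).card : ℤ) ≤ (Jᶜ.card : ℤ) := by
  set U := Finset.univ.filter fun v => ∀ e ∈ J, v ∉ G.ends e with hU
  let s := G.compSetoid (J : Set E)
  let q : V → Quotient s := Quotient.mk s
  have hsing : ∀ u ∈ U, ∀ v, q v = q u → v = u := by
    intro u hu v hv
    have h1 : (fun w => if w = u then (1 : ℚ) else 0) ∈ G.locConst (J : Set E) := by
      intro e he a b hab
      have h2 := (Finset.mem_filter.mp hu).2 e he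
      rw [hab] at h2
      simp only [Sym2.mem_iff, not_or] at h2
      simp [Ne.symm h2.1, Ne.symm h2.2]
    have h3 : s v u := Quotient.exact hv
    have h4 := h3 _ h1
    by_contra hne
    simp [hne] at h4
  have hrank : (Fintype.card V : ℤ) - G.gRank J ≤ Fintype.card (Quotient s) := by
    have : Module.finrank ℚ (G.locConst (J : Set E)) ≤ Fintype.card (Quotient s) :=
      G.finrank_locConst_le (J : Set E)
    unfold gRank
    omega
  by_cases hc : ∃ C D : Quotient s, C ≠ D
  · have hclass : ∀ C : Quotient s, 2 * k + 2 * δ * ((U.filter fun v => q v = C).card) ≤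
        ∑ v with q v = C, ∑ e ∈ Jᶜ, G.inc e v := by
      intro C
      by_cases hCU : ∃ u ∈ U, q u = C
      · obtain ⟨u, hu, rfl⟩ := hCU
        have h1 : (U.filter fun v => q v = q u) = {u} := by
          ext v
          simp only [Finset.mem_filter, Finset.mem_singleton]
          exact ⟨fun h => hsing u hu v h.2, by rintro rfl; exact ⟨hu, rfl⟩⟩
        have h2 : (Finset.univ.filter fun v => q v = q u) = {u} := by
          ext v
          simp only [Finset.mem_filter, Finset.mem_singleton, Finset.mem_univ, true_and]
          exact ⟨fun h => hsing u hu v h, by rintro rfl; rfl⟩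
        rw [h1, h2, Finset.sum_singleton, Finset.card_singleton]
        have h3 : ∑ e ∈ Jᶜ, G.inc e u = ∑ e, G.inc e u := by
          apply Finset.sum_subset (Finset.subset_univ _)
          intro e _ he
          have he : e ∈ J := by simpa using he
          have h4 := (Finset.mem_filter.mp hu).2 e he
          have h5 : G.ends e ≠ s(u, u) := by
            intro h5
            rw [h5] at h4
            simp at h4
          simp [inc, h4, h5]
        rw [h3, ← deg_eq_sum_inc]
        have := hdeg u
        omega
      · have h1 : (U.filter fun v => q v = C) = ∅ := by
          apply Finset.filter_eq_empty_iff.mpr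
          intro v hv h
          exact hCU ⟨v, hv, h⟩
        rw [h1, Finset.card_empty]
        obtain ⟨D, hD⟩ : ∃ D, D ≠ C := by
          obtain ⟨D, D', hDD⟩ := hc
          by_cases h : D = C
          · exact ⟨D', fun h' => hDD (h.trans h'.symm)⟩
          · exact ⟨D, h⟩
        obtain ⟨x, hx⟩ := Quotient.exists_rep C
        obtain ⟨y, hy⟩ := Quotient.exists_rep D
        have hcut := hG.le_cut {v | q v = C} (x := x) (y := y) hx
          (fun h => hD (hy.symm.trans h))
        rw [Set.ncard_eq_toFinset_card'] at hcut
        have h2 : ({e | ∃ a ∈ {v | q v = C}, ∃ b ∉ {v | q v = C}, G.ends e = s(a, b)}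
            : Set E).toFinset.card ≤ ∑ e ∈ Jᶜ, ∑ v with q v = C, G.inc e v := by
          rw [Finset.card_eq_sum_ones]
          refine (Finset.sum_le_sum (g := fun e => ∑ v with q v = C, G.inc e v) ?_).trans
            (Finset.sum_le_sum_of_subset ?_)
          · intro e he
            simp only [Set.mem_toFinset, Set.mem_ofPred_eq] at he
            obtain ⟨a, ha, b, hb, hab⟩ := he
            refine le_trans ?_ (Finset.single_le_sum (fun _ _ => Nat.zero_le _)
              (Finset.mem_filter.mpr ⟨Finset.mem_univ a, ha⟩))
            simp [inc, hab]
          · intro e he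
            simp only [Set.mem_toFinset, Set.mem_ofPred_eq] at he
            obtain ⟨a, ha, b, hb, hab⟩ := he
            rw [Finset.mem_compl]
            intro heJ
            apply hb
            rw [← ha]
            exact Quotient.sound fun g hg => (hg e heJ a b hab).symm
        rw [Finset.sum_comm] at h2
        omega
    have hsum := Finset.sum_le_sum fun C (_ : C ∈ Finset.univ) => hclass C
    rw [Finset.sum_fiberwise, Finset.sum_comm, Finset.sum_congr rfl fun e _ => G.sum_inc e,
      Finset.sum_add_distrib, ← Finset.mul_sum (f := fun C => (U.filter fun v => q v = C).card),
      ← Finset.card_eq_sum_card_fiberwise (fun _ _ => Finset.mem_univ _)] at hsum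
    simp only [Finset.sum_const, Finset.card_univ, smul_eq_mul] at hsum
    have hk : (k : ℤ) * ((Fintype.card V : ℤ) - G.gRank J) ≤ k * Fintype.card (Quotient s) :=
      mul_le_mul_of_nonneg_left hrank (by positivity)
    zify at hsum
    nlinarith
  · push Not at hc
    have : Subsingleton (Quotient s) := ⟨hc⟩
    have h1 : Fintype.card (Quotient s) ≤ 1 := Fintype.card_le_one_iff_subsingleton.mpr this
    -- With a single class of size at least two there is no uncovered vertex.
    have h2 : U = ∅ := by
      apply Finset.eq_empty_of_forall_notMem
      intro u hu
      obtain ⟨v, hv⟩ := Fintype.exists_ne_of_one_lt_card hG.1 u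
      exact hv (hsing u hu v (hc _ _))
    rw [h2, Finset.card_empty]
    have h3 : (k : ℤ) * ((Fintype.card V : ℤ) - 1 - G.gRank J) ≤ 0 :=
      mul_nonpos_of_nonneg_of_nonpos (by positivity) (by omega)
    have h4 : (0 : ℤ) ≤ Jᶜ.card := by positivity
    push_cast
    linarith

/-- An edge set containing `k` disjoint sets of full graphic rank is `k`-edge-connected: fewer than
`k` deletions miss one of them. -/
theorem edgeConnectedSub_of_trees [Fintype V] [Fintype E] (G : Multigraph V E) (k : ℕ)
    (hV : 1 < Fintype.card V) (F : Fin k → Set E)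
    (hdisj : ∀ i j e, e ∈ F i → e ∈ F j → i = j)
    (hF : ∀ i, (Fintype.card V : ℤ) - 1 ≤ G.gRank (F i)) :
    G.EdgeConnectedSub (⋃ i, F i) k := by
  classical
  refine ⟨hV, fun S hS hSk => ?_⟩
  obtain ⟨i, hi⟩ : ∃ i, ∀ e ∈ F i, e ∉ S := by
    by_contra h
    push Not at h
    choose p hp hpS using h
    have hinj : Function.Injective p := fun i j hij => hdisj i j (p i) (hp i) (hij ▸ hp j)
    have h1 : (Set.range p).ncard ≤ S.ncard :=
      Set.ncard_le_ncard (by rintro _ ⟨i, rfl⟩; exact hpS i) hS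
    rw [← Set.image_univ, Set.ncard_image_of_injective _ hinj, Set.ncard_univ, Nat.card_fin] at h1
    omega
  obtain ⟨v₀⟩ : Nonempty V := Fintype.card_pos_iff.mp (by omega)
  have : Nonempty (Set.univ : Set V) := ⟨⟨v₀, trivial⟩⟩
  refine ⟨fun x y => ?_⟩
  by_contra hxy
  obtain ⟨e, he, a, ha, b, hb, hab⟩ := G.exists_crossing (F i) (hF i)
    {v | (G.simpleOn Set.univ ((⋃ i, F i) \ S)).Reachable x ⟨v, trivial⟩}
    (x := x.1) (y := y.1) (SimpleGraph.Reachable.refl _) hxy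
  refine hb (SimpleGraph.Reachable.trans ha (SimpleGraph.Adj.reachable ?_))
  rw [simpleOn, SimpleGraph.fromRel_adj]
  refine ⟨?_, Or.inl ⟨e, ⟨Set.mem_iUnion.mpr ⟨i, he⟩, hi e he⟩, hab⟩⟩
  intro h
  have h : a = b := congrArg Subtype.val h
  exact hb (h ▸ ha)

/-! ### Choosing trees and slots -/

/-- The objects an edge may choose: membership in the `i`-th tree, as `inl (e, i)`; a slot `(v, j)`
at a vertex, as `inr (some (v, j))`; or the joker `inr none`. -/
abbrev Choice (V E : Type*) (k δ : ℕ) := (E × Fin k) ⊕ Option (V × Fin δ)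

/-- Slots have weight one, the joker has weight `d`. The choices of a tree have weight zero, since
they are counted by the graphic rank. -/
def wt {k δ : ℕ} (d : ℤ) : Choice V E k δ → ℤ
  | .inl _ => 0
  | .inr none => d
  | .inr (some _) => 1

/-- The rank of a set of choices, to which `rado` is applied. -/
noncomputable def rk [Fintype V] (G : Multigraph V E) {k δ : ℕ} (d : ℤ)
    (X : Finset (Choice V E k δ)) : ℤ :=
  ∑ i, G.gRank {e | Sum.inl (e, i) ∈ X} + ∑ x ∈ X, wt d x

theorem wt_nonneg {k δ : ℕ} {d : ℤ} (hd : 0 ≤ d) (x : Choice V E k δ) : 0 ≤ wt d x := by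
  rcases x with x | _ | x <;> simp [wt, hd]

theorem rk_mono [Fintype V] (G : Multigraph V E) {k δ : ℕ} {d : ℤ} (hd : 0 ≤ d)
    (P Q : Finset (Choice V E k δ)) (h : P ⊆ Q) : G.rk d P ≤ G.rk d Q :=
  add_le_add (Finset.sum_le_sum fun _ _ => G.gRank_mono fun _ he => h he)
    (Finset.sum_le_sum_of_subset_of_nonneg h fun _ _ _ => wt_nonneg hd _)

open Classical in
theorem rk_submodular [Fintype V] (G : Multigraph V E) {k δ : ℕ} (d : ℤ)
    (P Q : Finset (Choice V E k δ)) :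
    G.rk d (P ∪ Q) + G.rk d (P ∩ Q) ≤ G.rk d P + G.rk d Q := by
  have h1 : ∑ i, G.gRank {e | Sum.inl (e, i) ∈ P ∪ Q} + ∑ i, G.gRank {e | Sum.inl (e, i) ∈ P ∩ Q}
      ≤ ∑ i, G.gRank {e | Sum.inl (e, i) ∈ P} + ∑ i, G.gRank {e | Sum.inl (e, i) ∈ Q} := by
    rw [← Finset.sum_add_distrib, ← Finset.sum_add_distrib]
    refine Finset.sum_le_sum fun i _ => ?_
    convert G.gRank_submodular {e | Sum.inl (e, i) ∈ P} {e | Sum.inl (e, i) ∈ Q} using 3 <;>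
      ext <;> simp
  have h2 := Finset.sum_union_inter (s₁ := P) (s₂ := Q) (f := wt d)
  unfold rk
  linarith

open Classical in
/-- The choices available to the edge `e`. -/
noncomputable def choices [Fintype V] [Fintype E] (G : Multigraph V E) (k δ : ℕ) (e : E) :
    Finset (Choice V E k δ) :=
  Finset.univ.filter fun x => match x with
    | .inl p => p.1 = e
    | .inr none => True
    | .inr (some p) => p.1 ∈ G.ends e

open Classical in
/-- The choices available to a nonempty `J` have rank
`k r(J) + δ (n - u(J)) + d`, for `r` the graphic rank. -/
theorem rk_biUnion [Fintype V] [Fintype E] (G : Multigraph V E) (k δ : ℕ) (d : ℤ)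
    (J : Finset E) (hJ : J.Nonempty) :
    G.rk d (J.biUnion (G.choices k δ)) = k * G.gRank J +
      (δ * ((Fintype.card V : ℤ) -
        (Finset.univ.filter fun v => ∀ e ∈ J, v ∉ G.ends e).card) + d) := by
  unfold rk
  congr 1
  · have : ∀ i : Fin k, {e | Sum.inl (e, i) ∈ J.biUnion (G.choices k δ)} = (J : Set E) := by
      intro i
      ext e
      simp [choices]
    simp only [this, Finset.sum_const, Finset.card_univ, Fintype.card_fin, nsmul_eq_mul]
  · have h1 : ∑ x ∈ J.biUnion (G.choices k δ), wt d x =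
        ∑ x, if x ∈ J.biUnion (G.choices k δ) then wt d x else 0 := by
      rw [Finset.sum_ite_mem, Finset.univ_inter]
    have h2 : ∀ v, (∃ e ∈ J, v ∈ G.ends e) ↔ ¬ ∀ e ∈ J, v ∉ G.ends e := by
      intro v
      push Not
      rfl
    have h3 := Finset.card_filter_add_card_filter_not (s := (Finset.univ : Finset V))
      (fun v => ∀ e ∈ J, v ∉ G.ends e)
    rw [Finset.card_univ] at h3
    have h4 : ∑ v : V, (if ∃ e ∈ J, v ∈ G.ends e then (1 : ℤ) else 0) =
        (Fintype.card V : ℤ) - (Finset.univ.filter fun v => ∀ e ∈ J, v ∉ G.ends e).card := by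
      simp only [h2]
      rw [← Finset.natCast_card_filter]
      omega
    have h5 : ∃ e, e ∈ J := hJ
    rw [h1, Fintype.sum_sum_type, Fintype.sum_option, ← h4]
    simp only [choices, Finset.mem_biUnion, Finset.mem_filter, Finset.mem_univ, true_and, wt,
      ite_self, Finset.sum_const_zero, zero_add, and_true, h5, if_true]
    rw [Fintype.sum_prod_type, Finset.mul_sum]
    rw [add_comm]
    congr 1
    refine Finset.sum_congr rfl fun v _ => ?_
    by_cases h : ∃ e ∈ J, v ∈ G.ends e <;> simp only [h, if_true, if_false] <;> simp

end Multigraph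

open Multigraph in
/-- For any positive integers `k₀` and `δ₀` there is `d₀` such that the edge set of every
`16k₀`-edge-connected multigraph of minimum degree at least `d₀` can be partitioned into
two spanning subgraphs, one `k₀`-edge-connected and the other of minimum degree at least
`δ₀`. -/
theorem split_connectivity_and_degree (k₀ δ₀ : ℕ) (hk₀ : 0 < k₀) (hδ₀ : 0 < δ₀) :
    ∃ d₀ : ℕ, ∀ (V E : Type) [Fintype V] [Fintype E] (G : Multigraph V E),
      G.EdgeConnected (16 * k₀) → (∀ v : V, d₀ ≤ G.deg v) →
      ∃ F : Set E, G.EdgeConnectedSub F k₀ ∧ ∀ v : V, δ₀ ≤ G.degOn Fᶜ v := by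
  classical
  refine ⟨2 * (k₀ + δ₀), fun V E _ _ G hG hdeg => ?_⟩
  have hV := hG.1
  have : Nonempty V := Fintype.card_pos_iff.mp (by omega)
  have hb := G.count_bound k₀ δ₀ hG hdeg
  obtain ⟨d, hd⟩ : ∃ d : ℤ, d = (Fintype.card E : ℤ) - k₀ * ((Fintype.card V : ℤ) - 1) -
    δ₀ * Fintype.card V := ⟨_, rfl⟩
  have hd0 : 0 ≤ d := by
    have h1 := hb ∅
    simp [G.gRank_empty] at h1
    linarith
  have hrado : ∀ J : Finset E, (J.card : ℤ) ≤ G.rk d (J.biUnion (G.choices k₀ δ₀)) := by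
    intro J
    rcases J.eq_empty_or_nonempty with rfl | hJ
    · simp [rk, G.gRank_empty]
    · rw [G.rk_biUnion k₀ δ₀ d J hJ]
      have h1 := hb J
      have h2 := Finset.card_add_card_compl J
      zify at h2
      rw [hd]
      linarith
  obtain ⟨φ, hφ, hrk⟩ := rado (G.rk d) (by simp [rk, G.gRank_empty]) (G.rk_mono hd0)
    (G.rk_submodular d) _ (G.choices k₀ δ₀) rfl hrado
  -- The rank of all choices is bounded by `|E|`, so equality holds in every summand.
  set X := Finset.univ.image φ with hX
  have htree_le : ∑ i : Fin k₀, G.gRank {e | Sum.inl (e, i) ∈ X} ≤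
      k₀ * ((Fintype.card V : ℤ) - 1) := by
    refine (Finset.sum_le_sum fun i _ => G.gRank_le _).trans ?_
    simp only [Finset.sum_const, Finset.card_univ, Fintype.card_fin, nsmul_eq_mul, le_refl]
  have htotal : ∑ x : Choice V E k₀ δ₀, wt d x = δ₀ * (Fintype.card V : ℤ) + d := by
    simp [Fintype.sum_sum_type, Fintype.sum_option, wt]
    ring
  have hwt_le : ∑ x ∈ X, wt d x ≤ δ₀ * (Fintype.card V : ℤ) + d := by
    rw [← htotal]
    exact Finset.sum_le_sum_of_subset_of_nonneg (Finset.subset_univ _) fun _ _ _ => wt_nonneg hd0 _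
  unfold rk at hrk
  have htree : ∀ i : Fin k₀, (Fintype.card V : ℤ) - 1 ≤ G.gRank {e | Sum.inl (e, i) ∈ X} := by
    intro i
    by_contra hlt
    have h1 : ∑ i : Fin k₀, G.gRank {e | Sum.inl (e, i) ∈ X} <
        ∑ i : Fin k₀, ((Fintype.card V : ℤ) - 1) :=
      Finset.sum_lt_sum (fun i _ => G.gRank_le _) ⟨i, Finset.mem_univ _, not_le.mp hlt⟩
    simp only [Finset.sum_const, Finset.card_univ, Fintype.card_fin, nsmul_eq_mul] at h1
    linarith
  have hslot : ∀ p : V × Fin δ₀, Sum.inr (some p) ∈ X := by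
    intro p
    by_contra hp
    have h1 : ∑ x ∈ X, wt d x < ∑ x : Choice V E k₀ δ₀, wt d x :=
      Finset.sum_lt_sum_of_subset (Finset.subset_univ _) (Finset.mem_univ _) hp
        (by simp [wt]) fun _ _ _ => wt_nonneg hd0 _
    linarith
  have hinl : ∀ e i, Sum.inl (e, i) ∈ X → φ e = Sum.inl (e, i) := by
    intro e i h
    obtain ⟨e', -, he'⟩ := Finset.mem_image.mp h
    have h1 := hφ e'
    rw [he'] at h1
    simp only [choices, Finset.mem_filter, Finset.mem_univ, true_and] at h1
    have h1 : e = e' := h1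
    subst h1
    exact he'
  refine ⟨⋃ i, {e | Sum.inl (e, i) ∈ X},
    G.edgeConnectedSub_of_trees k₀ hV _ (fun i j e hi hj => ?_) htree, fun v => ?_⟩
  · have := (hinl e i hi).symm.trans (hinl e j hj)
    simpa using this
  · have h1 : ∀ j : Fin δ₀, ∃ e, φ e = Sum.inr (some (v, j)) := by
      intro j
      obtain ⟨e, -, he⟩ := Finset.mem_image.mp (hslot (v, j))
      exact ⟨e, he⟩
    choose p hp using h1
    have hinj : Function.Injective p := by
      intro i j hij
      have := (hp i).symm.trans ((congrArg φ hij).trans (hp j))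
      simpa using this
    unfold degOn
    refine le_trans ?_ (Nat.le_add_right _ _)
    have h2 : (Set.range p).ncard = δ₀ := by
      rw [← Set.image_univ, Set.ncard_image_of_injective _ hinj, Set.ncard_univ, Nat.card_fin]
    refine h2.ge.trans ?_
    refine Set.ncard_le_ncard ?_ (Set.toFinite _)
    rintro _ ⟨j, rfl⟩
    refine ⟨?_, ?_⟩
    · intro h
      obtain ⟨i, hi⟩ := Set.mem_iUnion.mp h
      have := (hinl _ _ hi).symm.trans (hp j)
      simp at this
    · have h3 := hφ (p j)
      rw [hp j] at h3
      simpa [choices] using h3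
end

section
/- Every 2-edge-connected multigraph G contains a spanning tree T such that deg_T(v) ≤ (deg_G(v) + 3)/2 for every vertex v of G. -/
/-!
The graph `G` has an orientation in which every vertex is reachable from a root `r` and out-degree
exceeds in-degree by at most one everywhere. Take an out-arborescence of it rooted at `r`
(`exists_arborescence`): a vertex `v` has at most one arc entering it, so its tree degree is at most
`d⁺(v) + 1`, and `2 d⁺(v) ≤ deg v + 1` gives `2 deg_T v ≤ deg v + 3`.

The orientation comes from an ear decomposition. As `G` is `2`-edge-connected, its edge set is built
from `r` by successively adding ears, that is, paths or cycles meeting the current vertex set in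
exactly their ends (`EarSystem.exists_larger`, `exists_earSystem_univ`). If each ear is made into a
directed path, in either direction, then everything is reachable from `r`; and an ear from `a` to `c`
contributes to out-degree minus in-degree exactly as a single arc from `a` to `c` would, inner
vertices contributing zero. It remains to choose the directions of the ears so that the auxiliary
multigraph, with one edge `ac` per ear, is oriented with out-degree and in-degree differing by at
most one at each vertex; every finite multigraph has such an orientation (`exists_balanced`).
-/

open SimpleGraph

namespace Multigraph

section Orientation

open scoped Classical

variable {V E : Type}

/-! ### Balanced orientations of a list of edges -/

/-- The boundary `δ_{x.1} - δ_{x.2}` of an arc `x` from `x.1` to `x.2`: summed over a set of arcs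
it gives out-degree minus in-degree. -/
noncomputable def bdry (x : V × V) : V → ℤ :=
  fun v => (if x.1 = v then 1 else 0) - (if x.2 = v then 1 else 0)

lemma bdry_swap (x : V × V) : bdry x.swap = -bdry x := by
  funext v; simp [bdry]

/-- `SignedSum L b` says that `b = ∑ ± bdry x`, over the entries `x` of `L`, for some choice of
signs; that is, `b` is the excess (out-degree minus in-degree) of an orientation of the multigraph
with edge list `L`. -/
def SignedSum : List (V × V) → (V → ℤ) → Prop
  | [], b => b = 0
  | x :: L, b => SignedSum L (b - bdry x) ∨ SignedSum L (b + bdry x)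

/-- The degree of `v` in the multigraph with edge list `L`; a loop contributes `2`. -/
noncomputable def listDeg (L : List (V × V)) (v : V) : ℕ :=
  (L.map fun x => (if x.1 = v then 1 else 0) + (if x.2 = v then 1 else 0)).sum

lemma SignedSum.exists (L : List (V × V)) : ∃ b, SignedSum L b := by
  induction L with
  | nil => exact ⟨0, rfl⟩
  | cons x L ih =>
    obtain ⟨b, hb⟩ := ih
    exact ⟨b + bdry x, Or.inl (by simpa using hb)⟩

lemma SignedSum.abs_le {L : List (V × V)} {b : V → ℤ} (h : SignedSum L b) (v : V) :
    |b v| ≤ listDeg L v := by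
  induction L generalizing b with
  | nil => simp only [SignedSum] at h; simp [h]
  | cons x L ih =>
    have hx : |bdry x v| ≤ (((if x.1 = v then 1 else 0) + (if x.2 = v then 1 else 0) : ℕ) : ℤ) := by
      unfold bdry; split_ifs <;> simp
    have hd : listDeg (x :: L) v =
        ((if x.1 = v then 1 else 0) + (if x.2 = v then 1 else 0)) + listDeg L v := by
      simp [listDeg]
    rw [hd, Nat.cast_add]
    rcases h with h | h
    · have := ih h
      simp only [Pi.sub_apply] at this
      grind
    · have := ih h
      simp only [Pi.add_apply] at this
      grind

/-- An edge at `v` can be moved to the front of the list, listed with first entry `v`. -/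
lemma exists_front {L : List (V × V)} {v : V} (h : 1 ≤ listDeg L v) :
    ∃ w L', L.length = L'.length + 1 ∧
      listDeg L v = 1 + (if w = v then 1 else 0) + listDeg L' v ∧
      ∀ b, SignedSum ((v, w) :: L') b → SignedSum L b := by
  induction L with
  | nil => simp [listDeg] at h
  | cons x L ih =>
    have hd : ∀ (y : V × V) (M : List (V × V)), listDeg (y :: M) v =
        ((if y.1 = v then 1 else 0) + (if y.2 = v then 1 else 0)) + listDeg M v := by
      intro y M; simp [listDeg]
    obtain ⟨p, q⟩ := x
    by_cases hp : p = v
    · subst hp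
      exact ⟨q, L, rfl, by simp [hd], fun b hb => hb⟩
    by_cases hq : q = v
    · subst hq
      refine ⟨p, L, rfl, by simp [hd]; omega, fun b hb => ?_⟩
      have hs : bdry (q, p) = -bdry (p, q) := bdry_swap (p, q)
      simp only [SignedSum, hs, sub_neg_eq_add, ← sub_eq_add_neg] at hb ⊢
      exact hb.symm
    · obtain ⟨w, L', h1, h2, h3⟩ := ih (by simpa [hd, hp, hq] using h)
      refine ⟨w, (p, q) :: L', by simp [h1], by simp [hd, hp, hq, h2], fun b hb => ?_⟩
      simp only [SignedSum] at hb h3 ⊢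
      rcases hb with (hb | hb) | (hb | hb)
      · exact Or.inl (h3 _ (Or.inl (by rwa [sub_right_comm])))
      · exact Or.inr (h3 _ (Or.inl (by rwa [← sub_add_eq_add_sub])))
      · exact Or.inl (h3 _ (Or.inr (by rwa [sub_add_eq_add_sub])))
      · exact Or.inr (h3 _ (Or.inr (by rwa [add_right_comm])))

/-- Every finite multigraph has a balanced orientation. Two edges `vw`, `vw'` at a common vertex
are replaced by a single edge `ww'`, whose orientation is then routed through `v`; when no two
edge ends meet, every orientation is balanced. -/
lemma exists_balanced (L : List (V × V)) : ∃ b, SignedSum L b ∧ ∀ v, |b v| ≤ 1 := by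
  induction hn : L.length using Nat.strong_induction_on generalizing L with
  | _ n ih =>
  by_cases hD : ∀ v, listDeg L v ≤ 1
  · obtain ⟨b, hb⟩ := SignedSum.exists L
    exact ⟨b, hb, fun v => (hb.abs_le v).trans (by exact_mod_cast hD v)⟩
  push Not at hD
  obtain ⟨v, hv⟩ := hD
  obtain ⟨w, L', h1, h2, h3⟩ := exists_front (L := L) (v := v) (by omega)
  by_cases hw : w = v
  · obtain ⟨b, hb, hb1⟩ := ih L'.length (by omega) L' rfl
    refine ⟨b, h3 b (Or.inl ?_), hb1⟩
    have h0 : bdry (v, w) = 0 := by subst hw; funext z; simp [bdry]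
    simpa [h0] using hb
  · rw [if_neg hw] at h2
    obtain ⟨w', L'', h1', -, h3'⟩ := exists_front (L := L') (v := v) (by omega)
    obtain ⟨b, hb, hb1⟩ := ih (L''.length + 1) (by omega) ((w, w') :: L'') rfl
    have hm : bdry (w, w') = bdry (v, w') - bdry (v, w) := by
      funext z; simp [bdry]
    refine ⟨b, h3 b ?_, hb1⟩
    simp only [SignedSum, hm] at hb h3' ⊢
    rcases hb with hb | hb
    · exact Or.inr (h3' _ (Or.inl (by convert hb using 1; abel)))
    · exact Or.inl (h3' _ (Or.inr (by convert hb using 1; abel)))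

/-! ### Orientations, reachability and ears -/

/-- `o` orients every edge of `G`: `o e` is an ordered pair whose unordered pair is `G.ends e`. -/
def Orients (G : Multigraph V E) (o : E → V × V) : Prop :=
  ∀ e, s((o e).1, (o e).2) = G.ends e

lemma exists_orients (G : Multigraph V E) : ∃ o, G.Orients o := by
  have h : ∀ e, ∃ x : V × V, s(x.1, x.2) = G.ends e := fun e => by
    induction G.ends e with | _ a b => exact ⟨(a, b), rfl⟩
  choose o ho using h
  exact ⟨o, ho⟩

/-- Reachability along directed walks whose arcs are edges of `F` oriented by `o`. -/
def Reach (o : E → V × V) (F : Finset E) : V → V → Prop :=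
  Relation.ReflTransGen fun x y => ∃ e ∈ F, o e = (x, y)

lemma Reach.mono {o o' : E → V × V} {F F' : Finset E} (hF : F ⊆ F') (ho : ∀ e ∈ F, o' e = o e)
    {x y : V} (h : Reach o F x y) : Reach o' F' x y :=
  Relation.ReflTransGen.mono
    (fun _ _ ⟨e, he, hxy⟩ => ⟨e, hF he, (ho e he).trans hxy⟩) _ _ h

lemma Reach.swap {o : E → V × V} {F : Finset E} {x y : V} (h : Reach o F x y) :
    Reach (fun e => (o e).swap) F y x := by
  refine Relation.ReflTransGen.mono ?_ _ _ (Relation.ReflTransGen.swap _ _ h)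
  rintro x y ⟨e, he, hxy⟩
  exact ⟨e, he, by simp [hxy]⟩

/-- The edges of `P`, oriented by `o`, form an ear from `a` to `c` through the vertices of `W`:
the excess of `P` is that of a single arc from `a` to `c`, and every vertex of `W` lies on a
directed walk from `a` and on one to `c`. Both ends may coincide. -/
structure IsEar (G : Multigraph V E) (o : E → V × V) (P : Finset E) (W : Finset V) (a c : V) :
    Prop where
  orients : G.Orients o
  sum_bdry : ∑ e ∈ P, bdry (o e) = bdry (a, c)
  reach_from : ∀ w ∈ W, Reach o P a w
  reach_to : ∀ w ∈ W, Reach o P w c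

/-- Prepending an edge to an ear. -/
lemma IsEar.cons {G : Multigraph V E} {o : E → V × V} {P : Finset E} {W : Finset V} {x y c : V}
    (h : G.IsEar o P W y c) {f : E} (hf : f ∉ P) (hends : G.ends f = s(x, y)) (hy : y ∈ W) :
    G.IsEar (Function.update o f (x, y)) (insert f P) (insert x W) x c := by
  have hne : ∀ e ∈ P, Function.update o f (x, y) e = o e := fun e he =>
    Function.update_of_ne (by rintro rfl; exact hf he) _ _
  have hxy : Reach (Function.update o f (x, y)) (insert f P) x y :=
    Relation.ReflTransGen.single ⟨f, Finset.mem_insert_self _ _, by simp⟩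
  refine ⟨fun e => ?_, ?_, fun w hw => ?_, fun w hw => ?_⟩
  · by_cases he : e = f
    · subst he; simp [hends]
    · simpa [he] using h.orients e
  · rw [Finset.sum_insert hf, Finset.sum_congr rfl fun e he => by rw [hne e he], h.sum_bdry]
    funext z; simp [bdry]
  · rcases Finset.mem_insert.1 hw with rfl | hw
    · exact Relation.ReflTransGen.refl
    · exact hxy.trans ((h.reach_from w hw).mono (Finset.subset_insert _ _) hne)
  · rcases Finset.mem_insert.1 hw with rfl | hw
    · exact hxy.trans ((h.reach_to y hy).mono (Finset.subset_insert _ _) hne)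
    · exact (h.reach_to w hw).mono (Finset.subset_insert _ _) hne

/-! ### Ear decompositions -/

/-- The edge set `F` decomposes into ears whose directions can be chosen independently: for a list
`L` of (end-pairs of) ears, every orientation of `L` is induced by an orientation of `F` with the
same excess, and in each of these all of `A` is reachable from `r`. -/
structure EarSystem (G : Multigraph V E) (r : V) (A : Finset V) (F : Finset E) : Prop where
  root_mem : r ∈ A
  ends_mem : ∀ e ∈ F, ∀ v ∈ G.ends e, v ∈ A
  exists_list : ∃ L, ∀ b, SignedSum L b → ∃ o, G.Orients o ∧ ∑ e ∈ F, bdry (o e) = b ∧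
    ∀ v ∈ A, Reach o F r v

/-- Orientations of disjoint edge sets `F` and `P` can be combined; if `P` starts at a vertex `a`
already reached by `F`, then everything reached by `P` from `a` is reached from `r`. -/
lemma exists_glue {G : Multigraph V E} {r a : V} {A W : Finset V} {F P : Finset E}
    (hFP : Disjoint F P) (ha : a ∈ A) {o o' : E → V × V} (ho : G.Orients o) (ho' : G.Orients o')
    (hA : ∀ v ∈ A, Reach o F r v) (hW : ∀ v ∈ W, Reach o' P a v) :
    ∃ p, G.Orients p ∧
      ∑ e ∈ F ∪ P, bdry (p e) = ∑ e ∈ F, bdry (o e) + ∑ e ∈ P, bdry (o' e) ∧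
      ∀ v ∈ A ∪ W, Reach p (F ∪ P) r v := by
  have hF : ∀ e ∈ F, (if e ∈ P then o' e else o e) = o e := fun e he =>
    if_neg (Finset.disjoint_left.1 hFP he)
  have hP : ∀ e ∈ P, (if e ∈ P then o' e else o e) = o' e := fun e he => if_pos he
  refine ⟨fun e => if e ∈ P then o' e else o e, fun e => ?_, ?_, fun v hv => ?_⟩
  · by_cases he : e ∈ P
    · simpa [he] using ho' e
    · simpa [he] using ho e
  · rw [Finset.sum_union hFP]
    congr 1
    · exact Finset.sum_congr rfl fun e he => congrArg bdry (hF e he)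
    · exact Finset.sum_congr rfl fun e he => congrArg bdry (hP e he)
  · rcases Finset.mem_union.1 hv with hv | hv
    · exact (hA v hv).mono Finset.subset_union_left hF
    · exact ((hA a ha).mono Finset.subset_union_left hF).trans
        ((hW v hv).mono Finset.subset_union_right hP)

/-- An ear system can be extended by an ear with both ends in `A`. Both directions of the new ear
are admissible because its vertices are reachable from either end. -/
lemma EarSystem.add {G : Multigraph V E} {r a c : V} {A W : Finset V} {F P : Finset E}
    {o' : E → V × V} (h : G.EarSystem r A F) (hFP : Disjoint F P) (hear : G.IsEar o' P W a c)
    (ha : a ∈ A) (hc : c ∈ A) (hP : ∀ e ∈ P, ∀ v ∈ G.ends e, v ∈ A ∪ W) :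
    G.EarSystem r (A ∪ W) (F ∪ P) := by
  refine ⟨Finset.mem_union_left _ h.root_mem, fun e he v hv => ?_, ?_⟩
  · rcases Finset.mem_union.1 he with he | he
    · exact Finset.mem_union_left _ (h.ends_mem e he v hv)
    · exact hP e he v hv
  obtain ⟨L, hL⟩ := h.exists_list
  refine ⟨(a, c) :: L, fun b hb => ?_⟩
  rcases hb with hb | hb
  · obtain ⟨o, ho, hs, hA⟩ := hL _ hb
    obtain ⟨p, hp, hps, hpr⟩ := exists_glue hFP ha ho hear.orients hA hear.reach_from
    exact ⟨p, hp, by rw [hps, hs, hear.sum_bdry]; abel, hpr⟩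
  · obtain ⟨o, ho, hs, hA⟩ := hL _ hb
    obtain ⟨p, hp, hps, hpr⟩ := exists_glue (o' := fun e => (o' e).swap) hFP hc ho
      (fun e => by rw [← hear.orients e]; exact Sym2.eq_swap) hA
      (fun v hv => (hear.reach_to v hv).swap)
    refine ⟨p, hp, ?_, hpr⟩
    rw [hps, hs, Finset.sum_congr (s₁ := P) rfl fun e _ => bdry_swap (o' e),
      Finset.sum_neg_distrib, hear.sum_bdry]
    abel

/-- Following a path from `x` until it first meets `A` gives an ear none of whose edges lies
inside `A`. -/
lemma exists_ear_of_path {G : Multigraph V E} (e : E) (A : Finset V) {H : SimpleGraph V}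
    (hH : ∀ x y, H.Adj x y → ∃ f, f ≠ e ∧ G.ends f = s(x, y)) {x y : V} (p : H.Walk x y)
    (hp : p.IsPath) (hy : y ∈ A) :
    ∃ o P W, ∃ c ∈ A, G.IsEar o P W x c ∧ x ∈ W ∧ (∀ w ∈ W, w ∈ p.support) ∧ e ∉ P ∧
      (∀ f ∈ P, ∀ v ∈ G.ends f, v ∈ W) ∧ ∀ f ∈ P, ∃ v ∈ G.ends f, v ∉ A := by
  -- the path stops at once if its first vertex lies in `A`
  have base : ∀ {z : V} (q : H.Walk z y), z ∈ A → ∃ o P W, ∃ c ∈ A, G.IsEar o P W z c ∧ z ∈ W ∧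
      (∀ w ∈ W, w ∈ q.support) ∧ e ∉ P ∧
      (∀ f ∈ P, ∀ v ∈ G.ends f, v ∈ W) ∧ ∀ f ∈ P, ∃ v ∈ G.ends f, v ∉ A := by
    intro z q hz
    obtain ⟨o, ho⟩ := G.exists_orients
    refine ⟨o, ∅, {z}, z, hz, ⟨ho, by funext; simp [bdry], ?_, ?_⟩, by simp, by simp, by simp,
      by simp, by simp⟩ <;>
    · intro w hw
      rw [Finset.mem_singleton.1 hw]
      exact Relation.ReflTransGen.refl
  induction p with
  | nil => exact base _ hy
  | @cons x z y hadj q ih =>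
    by_cases hx : x ∈ A
    · exact base _ hx
    rw [SimpleGraph.Walk.cons_isPath_iff] at hp
    obtain ⟨o, P, W, c, hc, hear, hzW, hWs, heP, hPW, hPA⟩ := ih hp.1 hy base
    obtain ⟨f, hfe, hf⟩ := hH x z hadj
    have hfP : f ∉ P := fun h => hp.2 (hWs x (hPW f h x (by simp [hf])))
    refine ⟨_, _, _, c, hc, hear.cons hfP hf hzW, by simp, ?_, ?_, ?_, ?_⟩
    · intro w hw
      rcases Finset.mem_insert.1 hw with rfl | hw
      · simp
      · simp [hWs w hw]
    · simp [heP, Ne.symm hfe]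
    · intro g hg v hv
      rcases Finset.mem_insert.1 hg with rfl | hg
      · rw [hf, Sym2.mem_iff] at hv
        rcases hv with rfl | rfl <;> simp [hzW]
      · exact Finset.mem_insert_of_mem (hPW g hg v hv)
    · intro g hg
      rcases Finset.mem_insert.1 hg with rfl | hg
      · exact ⟨x, by simp [hf], hx⟩
      · exact hPA g hg

lemma simpleOn_univ_adj {G : Multigraph V E} {F : Set E} {x y : (Set.univ : Set V)} :
    (G.simpleOn Set.univ F).Adj x y ↔ x ≠ y ∧ ∃ e ∈ F, G.ends e = s(x.1, y.1) := by
  rw [simpleOn, SimpleGraph.fromRel_adj, Sym2.eq_swap (a := y.1), or_self]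

/-- `simpleOn` on all of `V`, with the subtype of `Set.univ` replaced by `V` itself. -/
lemma exists_simpleGraph {G : Multigraph V E} {F : Set E}
    (h : (G.simpleOn Set.univ F).Connected) :
    ∃ H : SimpleGraph V, H.Connected ∧ ∀ x y, H.Adj x y → ∃ f ∈ F, G.ends f = s(x, y) := by
  refine ⟨(G.simpleOn Set.univ F).map (Equiv.Set.univ V).toEmbedding,
    (SimpleGraph.Iso.connected_iff (SimpleGraph.Iso.map (Equiv.Set.univ V) _)).1 h, ?_⟩
  rintro x y hxy
  rw [SimpleGraph.map_adj] at hxy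
  obtain ⟨u, v, huv, rfl, rfl⟩ := hxy
  exact (simpleOn_univ_adj.1 huv).2

/-- An ear system that does not yet cover all vertices can be enlarged: an edge `e = ab` leaves `A`
at `a`, and a path from `b` back to `A` avoiding `e` closes an ear. -/
lemma EarSystem.exists_larger [Fintype V] {G : Multigraph V E} (hG : G.EdgeConnected 2) {r : V}
    {A : Finset V} {F : Finset E} (h : G.EarSystem r A F) (hA : A ≠ Finset.univ) :
    ∃ A' F', A.card < A'.card ∧ G.EarSystem r A' F' := by
  obtain ⟨z, hz⟩ : ∃ z, z ∉ A := by
    by_contra! hc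
    exact hA (Finset.eq_univ_iff_forall.2 hc)
  obtain ⟨H, hH, hHadj⟩ := exists_simpleGraph (hG.2 ∅ Set.finite_empty (by simp))
  obtain ⟨p⟩ := hH.preconnected r z
  obtain ⟨d, -, hd1, hd2⟩ := p.exists_boundary_dart (A : Set V) (by simpa using h.root_mem)
    (by simpa using hz)
  obtain ⟨e, -, he⟩ := hHadj _ _ d.adj
  have ha : d.fst ∈ A := by simpa using hd1
  have hb : d.snd ∉ A := by simpa using hd2
  obtain ⟨H', hH', hHadj'⟩ := exists_simpleGraph (hG.2 {e} (Set.finite_singleton e) (by simp))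
  obtain ⟨q, hq⟩ := (hH'.preconnected d.snd d.fst).exists_isPath
  obtain ⟨o, P, W, c, hc, hear, hbW, -, heP, hPW, hPA⟩ := exists_ear_of_path e A
    (fun x y hxy => by
      obtain ⟨f, hf, hf'⟩ := hHadj' x y hxy
      exact ⟨f, by simpa using hf, hf'⟩) q hq ha
  refine ⟨_, _, ?_, h.add (P := insert e P) (W := insert d.fst W) ?_ (hear.cons heP he hbW)
    ha hc ?_⟩
  · refine Finset.card_lt_card (Finset.ssubset_iff_subset_ne.2 ⟨Finset.subset_union_left, ?_⟩)
    intro heq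
    exact hb (heq ▸ Finset.mem_union_right _ (Finset.mem_insert_of_mem hbW))
  · refine Finset.disjoint_left.2 fun f hf hf' => ?_
    rcases Finset.mem_insert.1 hf' with rfl | hf'
    · exact hb (h.ends_mem f hf _ (by simp [he]))
    · obtain ⟨v, hv, hvA⟩ := hPA f hf'
      exact hvA (h.ends_mem f hf v hv)
  · intro f hf v hv
    refine Finset.mem_union_right _ ?_
    rcases Finset.mem_insert.1 hf with rfl | hf
    · rw [he, Sym2.mem_iff] at hv
      rcases hv with rfl | rfl <;> simp [hbW]
    · exact Finset.mem_insert_of_mem (hPW f hf v hv)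

lemma exists_earSystem_verts [Fintype V] {G : Multigraph V E} (hG : G.EdgeConnected 2) (r : V) :
    ∃ F, G.EarSystem r Finset.univ F := by
  have key : ∀ n A F, Fintype.card V - A.card = n → G.EarSystem r A F →
      ∃ F, G.EarSystem r Finset.univ F := by
    intro n
    induction n using Nat.strong_induction_on with
    | _ n ih =>
    intro A F hn h
    by_cases hA : A = Finset.univ
    · exact ⟨F, hA ▸ h⟩
    · obtain ⟨A', F', hlt, h'⟩ := h.exists_larger hG hA
      have := Finset.card_le_univ A'
      exact ih _ (by omega) A' F' rfl h'
  refine key _ {r} ∅ rfl ⟨by simp, by simp, [], fun b hb => ?_⟩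
  obtain ⟨o, ho⟩ := G.exists_orients
  refine ⟨o, ho, by simpa using hb.symm, fun v hv => ?_⟩
  rw [Finset.mem_singleton.1 hv]
  exact Relation.ReflTransGen.refl

/-- Each edge not used by an ear system covering all vertices is an ear by itself. -/
lemma exists_earSystem_univ [Fintype V] [Fintype E] {G : Multigraph V E} (hG : G.EdgeConnected 2)
    (r : V) : G.EarSystem r Finset.univ Finset.univ := by
  obtain ⟨F, hF⟩ := exists_earSystem_verts hG r
  have key : ∀ S : Finset E, G.EarSystem r Finset.univ (F ∪ S) := by
    intro S
    induction S using Finset.induction_on with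
    | empty => simpa using hF
    | insert e S _ ih =>
      by_cases he : e ∈ F ∪ S
      · rwa [Finset.union_insert, Finset.insert_eq_of_mem he]
      · obtain ⟨o, ho⟩ := G.exists_orients
        have := ih.add (P := {e}) (W := ∅) (o' := o) (a := (o e).1) (c := (o e).2) (by simpa using he)
          ⟨ho, by simp, by simp, by simp⟩ (by simp) (by simp) (by simp)
        rwa [Finset.union_empty, Finset.union_assoc, Finset.union_comm S, ← Finset.insert_eq] at this
  have hu := key Finset.univ
  rwa [Finset.union_eq_right.2 (Finset.subset_univ F)] at hu

/-- A `2`-edge-connected multigraph has an orientation in which every vertex is reachable from `r`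
and out-degree and in-degree differ by at most one everywhere. -/
lemma exists_balanced_orientation [Fintype V] [Fintype E] {G : Multigraph V E}
    (hG : G.EdgeConnected 2) (r : V) :
    ∃ o, G.Orients o ∧ (∀ v, |∑ e, bdry (o e) v| ≤ 1) ∧ ∀ v, Reach o Finset.univ r v := by
  obtain ⟨L, hL⟩ := (exists_earSystem_univ hG r).exists_list
  obtain ⟨b, hb, hb1⟩ := exists_balanced L
  obtain ⟨o, ho, hs, hr⟩ := hL b hb
  refine ⟨o, ho, fun v => ?_, fun v => hr v (Finset.mem_univ v)⟩
  rw [← Finset.sum_apply, hs]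
  exact hb1 v

/-! ### Arborescences and degrees -/

/-- An orientation in which `r` reaches everything contains an out-arborescence `T` rooted at `r`:
its arcs have distinct heads, none of them `r`, and `T` still reaches every vertex. -/
lemma exists_arborescence [Fintype V] {o : E → V × V} {F : Finset E} {r : V}
    (hr : ∀ v, Reach o F r v) :
    ∃ T : Finset E, (∀ v, Reach o T r v) ∧ Set.InjOn (fun e => (o e).2) T ∧
      ∀ e ∈ T, (o e).2 ≠ r := by
  have key : ∀ n (A : Finset V) (T : Finset E), Fintype.card V - A.card = n → r ∈ A →
      (∀ v ∈ A, Reach o T r v) → Set.InjOn (fun e => (o e).2) T →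
      (∀ e ∈ T, (o e).2 ∈ A ∧ (o e).2 ≠ r) →
      ∃ T : Finset E, (∀ v, Reach o T r v) ∧ Set.InjOn (fun e => (o e).2) T ∧
        ∀ e ∈ T, (o e).2 ≠ r := by
    intro n
    induction n using Nat.strong_induction_on with
    | _ n ih =>
    intro A T hn hrA hA hinj hT
    by_cases hAu : ∀ v, v ∈ A
    · exact ⟨T, fun v => hA v (hAu v), hinj, fun e he => (hT e he).2⟩
    push Not at hAu
    obtain ⟨z, hz⟩ := hAu
    -- a directed walk from `r` to `z` has an arc leaving `A`
    obtain ⟨e, he1, he2⟩ : ∃ e, (o e).1 ∈ A ∧ (o e).2 ∉ A := by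
      by_contra! hc
      refine hz ?_
      have hz' := hr z
      clear hz
      induction hz' with
      | refl => exact hrA
      | tail _ h ih =>
        by_contra hy
        obtain ⟨e, -, he⟩ := h
        have h1 := hc e
        rw [he] at h1
        exact hy (h1 ih)
    have hle := Finset.card_le_univ (insert (o e).2 A)
    rw [Finset.card_insert_of_notMem he2] at hle
    refine ih _ ?_ (insert (o e).2 A) (insert e T) rfl (Finset.mem_insert_of_mem hrA) ?_ ?_ ?_
    · rw [Finset.card_insert_of_notMem he2]
      omega
    · have hmono : ∀ v ∈ A, Reach o (insert e T) r v := fun v hv =>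
        (hA v hv).mono (Finset.subset_insert _ _) fun _ _ => rfl
      intro v hv
      rcases Finset.mem_insert.1 hv with rfl | hv
      · exact (hmono _ he1).tail ⟨e, Finset.mem_insert_self _ _, rfl⟩
      · exact hmono v hv
    · rw [Finset.coe_insert]
      refine (Set.injOn_insert fun h => he2 (hT e h).1).2 ⟨hinj, ?_⟩
      rintro ⟨f, hf, hfe⟩
      exact he2 (hfe ▸ (hT f hf).1)
    · intro f hf
      rcases Finset.mem_insert.1 hf with rfl | hf
      · exact ⟨Finset.mem_insert_self _ _, fun h => he2 (h ▸ hrA)⟩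
      · exact ⟨Finset.mem_insert_of_mem (hT f hf).1, (hT f hf).2⟩
  refine key _ {r} ∅ rfl (by simp) (fun v hv => ?_) (by simp) (by simp)
  rw [Finset.mem_singleton.1 hv]
  exact Relation.ReflTransGen.refl

/-- An out-arborescence is a spanning tree: it is connected, and as its heads are distinct and
differ from `r` it has at most `|V| - 1` edges, so a loop, a parallel pair or a cycle would leave
too few edges for connectedness. -/
lemma isSpanningTree_of_arborescence [Fintype V] {G : Multigraph V E} {o : E → V × V}
    (ho : G.Orients o) {T : Finset E} {r : V} (hr : ∀ v, Reach o T r v)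
    (hinj : Set.InjOn (fun e => (o e).2) T) (hT : ∀ e ∈ T, (o e).2 ≠ r) :
    G.IsSpanningTree T := by
  have hreach : ∀ v, (G.simpleOn Set.univ T).Reachable ⟨r, trivial⟩ ⟨v, trivial⟩ := by
    intro v
    have hv := hr v
    induction hv with
    | refl => exact SimpleGraph.Reachable.refl _
    | @tail x y _ h ih =>
      obtain ⟨e, he, hxy⟩ := h
      by_cases hne : x = y
      · exact hne ▸ ih
      · refine ih.trans (SimpleGraph.Adj.reachable (simpleOn_univ_adj.2 ⟨fun h => hne (congrArg Subtype.val h), e, he, ?_⟩))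
        rw [← ho e, hxy]
  have hconn : (G.simpleOn Set.univ T).Connected :=
    (SimpleGraph.connected_iff_exists_forall_reachable _).2 ⟨⟨r, trivial⟩, fun w => hreach w.1⟩
  set T₀ := T.filter fun e => ¬ (G.ends e).IsDiag with hT₀
  have hcardV : Nat.card (Set.univ : Set V) = Fintype.card V := by simp
  have h1 := hconn.card_vert_le_card_edgeSet_add_one
  have h2 : Nat.card (G.simpleOn Set.univ T).edgeSet ≤ (T₀.image G.ends).card := by
    rw [Nat.card_coe_set_eq,
      ← Set.ncard_image_of_injective _ (Sym2.map.injective (Subtype.val_injective (p := (· ∈ Set.univ)))),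
      ← Set.ncard_coe_finset]
    refine Set.ncard_le_ncard ?_ (Finset.finite_toSet _)
    rintro _ ⟨z, hz, rfl⟩
    induction z with | _ x y =>
    obtain ⟨hne, e, he, hxy⟩ := simpleOn_univ_adj.1 hz
    refine Finset.mem_coe.2 (Finset.mem_image.2 ⟨e, Finset.mem_filter.2 ⟨he, ?_⟩, hxy⟩)
    rw [hxy, Sym2.mk_isDiag_iff]
    exact fun h => hne (Subtype.ext h)
  have h3 : (T₀.image G.ends).card ≤ T₀.card := Finset.card_image_le
  have h4 : T₀.card ≤ T.card := Finset.card_filter_le _ _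
  have h5 : T.card + 1 ≤ Fintype.card V := by
    rw [← Finset.card_image_of_injOn hinj,
      ← Finset.card_insert_of_notMem (a := r) (by simpa using hT)]
    exact Finset.card_le_univ _
  have hTT : T₀ = T := Finset.eq_of_subset_of_card_le (Finset.filter_subset _ _) (by omega)
  refine ⟨fun e he => ?_, ?_, hconn, ?_⟩
  · rw [← hTT] at he
    exact (Finset.mem_filter.1 he).2
  · rw [← hTT]
    exact Finset.card_image_iff.1 (by omega)
  · exact (SimpleGraph.isTree_iff_connected_and_card.2 ⟨hconn, by omega⟩).isAcyclic

/-- The degree is out-degree plus in-degree: a loop at `v` counts once in each, matching its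
contribution of `2` to `G.deg v`. -/
lemma deg_eq [Fintype E] {G : Multigraph V E} {o : E → V × V} (ho : G.Orients o) (v : V) :
    G.deg v = (Finset.univ.filter fun e => (o e).1 = v).card +
      (Finset.univ.filter fun e => (o e).2 = v).card := by
  have h1 : {e ∈ (Set.univ : Set E) | v ∈ G.ends e} =
      ((Finset.univ.filter fun e => (o e).1 = v) ∪ Finset.univ.filter fun e => (o e).2 = v :
        Finset E) := by
    ext e; simp [← ho e, eq_comm]
  have h2 : {e ∈ (Set.univ : Set E) | G.ends e = s(v, v)} =
      ((Finset.univ.filter fun e => (o e).1 = v) ∩ Finset.univ.filter fun e => (o e).2 = v :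
        Finset E) := by
    ext e; simp [← ho e, Prod.ext_iff]
  rw [deg, degOn, h1, h2, Set.ncard_coe_finset, Set.ncard_coe_finset,
    Finset.card_union_add_card_inter]

/-- In an out-arborescence a vertex has at most one entering arc, so its degree exceeds its
out-degree by at most one. -/
lemma degOn_le [Fintype E] {G : Multigraph V E} {o : E → V × V} (ho : G.Orients o)
    {T : Finset E} (hT : G.IsSpanningTree T) (hinj : Set.InjOn (fun e => (o e).2) T) (v : V) :
    G.degOn T v ≤ (Finset.univ.filter fun e => (o e).1 = v).card + 1 := by
  have h2 : {e ∈ (T : Set E) | G.ends e = s(v, v)} = ∅ := by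
    ext e
    simp only [Set.mem_ofPred_eq, Set.mem_empty_iff_false, iff_false, not_and]
    intro he h
    exact hT.1 e he (by simp [h])
  have h1 : {e ∈ (T : Set E) | v ∈ G.ends e} ⊆
      ((Finset.univ.filter fun e => (o e).1 = v) ∪ T.filter fun e => (o e).2 = v :
        Finset E) := by
    rintro e ⟨he, hv⟩
    rw [← ho e, Sym2.mem_iff] at hv
    have he' : e ∈ T := he
    simpa [he', eq_comm] using hv
  have h3 : (T.filter fun e => (o e).2 = v).card ≤ 1 := by
    refine Finset.card_le_one.2 fun e he f hf => ?_
    rw [Finset.mem_filter] at he hf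
    exact hinj he.1 hf.1 (he.2.trans hf.2.symm)
  have h4 := Set.ncard_le_ncard h1 (Finset.finite_toSet _)
  rw [Set.ncard_coe_finset] at h4
  have h5 := Finset.card_union_le (Finset.univ.filter fun e => (o e).1 = v)
    (T.filter fun e => (o e).2 = v)
  rw [degOn, h2, Set.ncard_empty]
  omega

end Orientation

end Multigraph

open Multigraph in
/-- Every `2`-edge-connected multigraph `G` contains a spanning tree `T` such that
`deg_T v ≤ (deg_G v + 3) / 2` for every vertex `v`. -/
theorem spanning_tree_of_two_edge_connected {V E : Type} [Fintype V] [Fintype E]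
    (G : Multigraph V E) (hG : G.EdgeConnected 2) :
    ∃ T : Set E, G.IsSpanningTree T ∧
      ∀ v : V, 2 * G.degOn T v ≤ G.deg v + 3 := by
  classical
  obtain ⟨r⟩ : Nonempty V := Fintype.card_pos_iff.1 (by have := hG.1; omega)
  obtain ⟨o, ho, hb, hr⟩ := exists_balanced_orientation hG r
  obtain ⟨T, hTr, hinj, hT⟩ := exists_arborescence hr
  have htree := isSpanningTree_of_arborescence ho hTr hinj hT
  refine ⟨T, htree, fun v => ?_⟩
  have h1 := degOn_le ho htree hinj v
  have h2 := deg_eq ho v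
  have h3 := (abs_le.1 (hb v)).2
  simp only [bdry, Finset.sum_sub_distrib, Finset.sum_boole] at h3
  have h4 : (Finset.univ.filter fun e => (o e).1 = v).card ≤
      (Finset.univ.filter fun e => (o e).2 = v).card + 1 := by
    zify
    convert (sub_le_iff_le_add'.1 h3) using 1
  grind
end

section
/- Let F be a proper forest and let k ≥ 2 be an integer. Then the k-chain F^{∘k} of F admits an F-decomposition. -/
/-!
Each component of `F` occupies `k` consecutive positions of the chain, so the positions
congruent to `r` modulo `k` meet every component exactly once (`existsUnique_position`).
Two distinct such positions differ by at least `k ≥ 2`, so the corresponding parts are pairwise vertex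
disjoint and together form a copy of `F`. Letting `r` run through the residues modulo `k` gives the
decomposition.
-/

open SimpleGraph

/-- The edges of `G` lying in the connected component `c`. -/
def componentEdges {V : Type*} (G : SimpleGraph V) (c : G.ConnectedComponent) :
    Set (Sym2 V) :=
  {e | e ∈ G.edgeSet ∧ ∀ v ∈ e, G.connectedComponentMk v = c}

/-- The vertices touched by a set of edges. -/
def vertsOf {U : Type*} (A : Set (Sym2 U)) : Set U := {v | ∃ e ∈ A, v ∈ e}

/-- `C` is (isomorphic to) the `k`-chain `F^{∘k}` of the forest `F`: its edge set is
partitioned into a linearly ordered sequence of parts in which each connected component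
of `F` occupies exactly `k` consecutive positions, each part is a copy of its component,
consecutive parts share exactly one vertex which is a leaf of both of them, the shared
vertices of two successive overlaps are distinct, non-consecutive parts are vertex
disjoint, and `C` is a tree. -/
def IsKChainOf {W U : Type*} (F : SimpleGraph W) (k : ℕ) (C : SimpleGraph U) : Prop :=
  ∃ (n : ℕ) (σ : Fin n → F.ConnectedComponent) (P : Fin n → Set (Sym2 U)),
    (∀ c : F.ConnectedComponent, {i : Fin n | σ i = c}.ncard = k) ∧
    (∀ i j l : Fin n, i ≤ j → j ≤ l → σ i = σ l → σ j = σ i) ∧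
    (∀ i, (P i).Nonempty) ∧ Pairwise (Function.onFun Disjoint P) ∧
    (⋃ i, P i) = C.edgeSet ∧
    C.Connected ∧ C.IsAcyclic ∧
    (∀ i, ∃ f : W → U, Set.InjOn f (σ i).supp ∧
      P i = Sym2.map f '' componentEdges F (σ i)) ∧
    (∀ i j : Fin n, (i : ℕ) + 1 < (j : ℕ) → vertsOf (P i) ∩ vertsOf (P j) = ∅) ∧
    (∀ i j : Fin n, (i : ℕ) + 1 = (j : ℕ) →
      (∃! v, v ∈ vertsOf (P i) ∩ vertsOf (P j)) ∧
      (∀ v ∈ vertsOf (P i) ∩ vertsOf (P j),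
        {e ∈ P i | v ∈ e}.ncard = 1 ∧ {e ∈ P j | v ∈ e}.ncard = 1)) ∧
    (∀ i j l : Fin n, (i : ℕ) + 1 = (j : ℕ) → (j : ℕ) + 1 = (l : ℕ) →
      ∀ u ∈ vertsOf (P i) ∩ vertsOf (P j), ∀ v ∈ vertsOf (P j) ∩ vertsOf (P l), u ≠ v)

/-- A block of `k` consecutive positions contains exactly one element of each residue class
modulo `k`. -/
lemma existsUnique_position {n k : ℕ} {α : Type*} (hk : 0 < k) (σ : Fin n → α)
    (hcard : ∀ c, {i : Fin n | σ i = c}.ncard = k)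
    (hconv : ∀ i j l : Fin n, i ≤ j → j ≤ l → σ i = σ l → σ j = σ i) (c : α) (r : Fin k) :
    ∃! i : Fin n, σ i = c ∧ (i : ℕ) % k = r := by
  classical
  -- Two congruent positions in the block would force it to contain at least `k + 1` positions.
  have key : ∀ i j : Fin n, σ i = c → σ j = c → (i : ℕ) % k = j % k → ¬ i < j := by
    intro i j hi hj hmod hlt
    have hsub : (Finset.Icc i j : Set (Fin n)) ⊆ {i | σ i = c} := by
      intro l hl
      rw [Finset.coe_Icc, Set.mem_Icc] at hl
      exact (hconv i l j hl.1 hl.2 (hi.trans hj.symm)).trans hi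
    have hle := Set.ncard_le_ncard hsub (Set.toFinite _)
    rw [Set.ncard_coe_finset, hcard, Fin.card_Icc] at hle
    have hlt' : (i : ℕ) < j := hlt
    have hdvd : k ∣ (j : ℕ) - i := (Nat.modEq_iff_dvd' hlt'.le).1 hmod
    have := Nat.le_of_dvd (by omega) hdvd
    omega
  have uniq : ∀ i j : Fin n, σ i = c → σ j = c → (i : ℕ) % k = j % k → i = j := by
    intro i j hi hj h
    rcases lt_trichotomy i j with hl | hl | hl
    · exact (key i j hi hj h hl).elim
    · exact hl
    · exact (key j i hj hi h.symm hl).elim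
  let φ : {i : Fin n | σ i = c} → Fin k := fun i => ⟨(i.1 : ℕ) % k, Nat.mod_lt _ hk⟩
  have hinj : Function.Injective φ := fun i j h =>
    Subtype.ext (uniq i.1 j.1 i.2 j.2 (congrArg Fin.val h))
  have hbij : Function.Bijective φ := by
    rw [Fintype.bijective_iff_injective_and_card]
    refine ⟨hinj, ?_⟩
    rw [Fintype.card_fin, ← Nat.card_eq_fintype_card, Nat.card_coe_set_eq, hcard]
  obtain ⟨i, hi⟩ := hbij.2 r
  have hir : ((i : Fin n) : ℕ) % k = r := congrArg Fin.val hi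
  exact ⟨i, ⟨i.2, hir⟩, fun j hj => uniq j i hj.1 i.2 (hj.2.trans hir.symm)⟩

/-- For every proper forest `F` and every `k ≥ 2`, the `k`-chain `F^{∘k}` has an
`F`-decomposition. -/
theorem kchain_decomposition {W U : Type} [Fintype W] [Fintype U]
    (F : SimpleGraph W) (hforest : F.IsAcyclic)
    (hproper : ∀ w : W, (F.neighborSet w).Nonempty)
    (k : ℕ) (hk : 2 ≤ k) (C : SimpleGraph U) (hC : IsKChainOf F k C) :
    HasDecompInto C F := by
  obtain ⟨n, σ, P, hcard, hconv, hne, hdisj, hunion, -, -, hcopy, hfar, -, -⟩ := hC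
  choose φ hφinj hφ using hcopy
  rcases isEmpty_or_nonempty W with hW | ⟨⟨w₀⟩⟩
  · -- Without components there are no positions, so `C` has no edges and zero parts suffice.
    refine ⟨0, fun i => i.elim0, fun i => i.elim0, fun i => i.elim0, ?_, fun i => i.elim0⟩
    have : IsEmpty (Fin n) := ⟨fun i => by
      obtain ⟨w, -⟩ := (σ i).exists_rep
      exact hW.elim w⟩
    rw [← hunion]
    simp
  have hpos := existsUnique_position (by omega : 0 < k) σ hcard hconv
  choose g hg hguniq using hpos
  refine ⟨k, fun r => {e | ∃ i : Fin n, (i : ℕ) % k = r ∧ e ∈ P i}, ?_, ?_, ?_, ?_⟩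
  · intro r
    obtain ⟨e, he⟩ := hne (g (F.connectedComponentMk w₀) r)
    exact ⟨e, _, (hg _ r).2, he⟩
  · intro r s hrs
    refine Set.disjoint_left.2 ?_
    rintro e ⟨i, hi, hei⟩ ⟨j, hj, hej⟩
    have hij : i = j := by
      by_contra hij
      exact Set.disjoint_left.1 (hdisj hij) hei hej
    subst hij
    exact hrs (Fin.ext (hi.symm.trans hj))
  · rw [← hunion]
    ext e
    simp only [Set.mem_iUnion, Set.mem_ofPred_eq]
    constructor
    · rintro ⟨_, i, -, he⟩
      exact ⟨i, he⟩
    · rintro ⟨i, he⟩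
      exact ⟨⟨(i : ℕ) % k, Nat.mod_lt _ (by omega)⟩, i, rfl, he⟩
  · intro r
    constructor
    · rintro e ⟨i, -, he⟩
      rw [← hunion]
      exact Set.mem_iUnion.2 ⟨i, he⟩
    -- Map each component of `F` onto its unique copy at a position congruent to `r`.
    let p : W → Fin n := fun w => g (F.connectedComponentMk w) r
    have hpσ : ∀ w, σ (p w) = F.connectedComponentMk w := fun w => (hg _ r).1
    have hedge : ∀ a b, F.Adj a b → s(a, b) ∈ componentEdges F (σ (p a)) := by
      intro a b hab
      refine ⟨hab, fun v hv => ?_⟩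
      rw [hpσ]
      rcases Sym2.mem_iff.1 hv with rfl | rfl
      · rfl
      · exact (SimpleGraph.ConnectedComponent.eq.2 hab.reachable).symm
    have hmemP : ∀ a b, F.Adj a b → s(φ (p a) a, φ (p a) b) ∈ P (p a) := by
      intro a b hab
      rw [hφ]
      exact ⟨s(a, b), hedge a b hab, rfl⟩
    -- Properness puts every vertex of `F` on an edge, so vertex disjointness of the parts applies.
    have hverts : ∀ w, φ (p w) w ∈ vertsOf (P (p w)) := by
      intro w
      obtain ⟨b, hb⟩ := hproper w
      exact ⟨_, hmemP w b hb, Sym2.mem_mk_left _ _⟩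
    have hpeq : ∀ a b, (p a : ℕ) ≤ p b → φ (p a) a = φ (p b) b → p a = p b := by
      intro a b hle hab
      by_contra hne'
      have hlt : (p a : ℕ) < p b := lt_of_le_of_ne hle fun h => hne' (Fin.ext h)
      have hmod : (p a : ℕ) % k = p b % k := (hg _ r).2.trans (hg _ r).2.symm
      have hdvd : k ∣ (p b : ℕ) - p a := (Nat.modEq_iff_dvd' hle).1 hmod
      have := Nat.le_of_dvd (by omega) hdvd
      have hmem : φ (p a) a ∈ vertsOf (P (p a)) ∩ vertsOf (P (p b)) :=
        ⟨hverts a, hab ▸ hverts b⟩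
      rw [hfar _ _ (by omega)] at hmem
      exact hmem
    have hinj : Function.Injective fun w => φ (p w) w := by
      intro a b hab
      have hab' : φ (p a) a = φ (p b) b := hab
      have hp : p a = p b := by
        rcases le_total (p a : ℕ) (p b) with h | h
        · exact hpeq a b h hab'
        · exact (hpeq b a h hab'.symm).symm
      refine hφinj (p a) (hpσ a).symm ?_ (hab'.trans (by rw [hp]))
      rw [hp]
      exact (hpσ b).symm
    refine ⟨⟨_, hinj⟩, ?_⟩
    ext e
    constructor
    · rintro ⟨i, hi, he⟩
      rw [hφ] at he
      obtain ⟨e', ⟨he', hc⟩, rfl⟩ := he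
      refine ⟨e', he', Sym2.map_congr fun v hv => ?_⟩
      have hpi : p v = i := (hguniq _ r i ⟨(hc v hv).symm, hi⟩).symm
      change φ (p v) v = φ i v
      rw [hpi]
    · rintro ⟨e', he', rfl⟩
      induction e' using Sym2.ind with
      | _ a b =>
        have hab : F.Adj a b := he'
        have hpab : p a = p b :=
          congrArg (fun c => g c r) (SimpleGraph.ConnectedComponent.eq.2 hab.reachable)
        refine ⟨p a, (hg _ r).2, ?_⟩
        change s(φ (p a) a, φ (p b) b) ∈ P (p a)
        rw [← hpab]
        exact hmemP a b hab
end
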